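/- Let ⟨ω₁, …, ω_d⟩ be a d-web of hypersurfaces on U with d ≥ n + 2. Then the web is locally linearizable at a point p ∈ U (there is a neighborhood V of p and a diffeomorphism of V onto an open subset of ℝⁿ mapping every leaf of every web foliation into an affine hyperplane) if and only if, on some neighborhood of p, the web is geodesic for a torsion-free affine connection Γ that is projectively equivalent to a flat connection (a torsion-free connection whose curvature Rᵏₗᵢⱼ = ∂ᵢΓᵏⱼₗ − ∂ⱼΓᵏᵢₗ + Σₘ(Γᵏᵢₘ Γᵐⱼₗ − Γᵏⱼₘ Γᵐᵢₗ) vanishes identically). -/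

import Mathlib

open scoped BigOperators

/-- Partial derivative in the `i`-th coordinate direction. -/
noncomputable def pd {n : ℕ} (i : Fin n) (f : (Fin n → ℝ) → ℝ) (x : Fin n → ℝ) : ℝ :=
  fderiv ℝ f x (Pi.single i 1)

/-- A torsion-free affine connection on `U`, given by its Christoffel symbols `Γ k i j`
(smooth on `U` and symmetric in the lower indices `i j`). -/
def IsTorsionFreeConn {n : ℕ} (U : Set (Fin n → ℝ))
    (Γ : Fin n → Fin n → Fin n → (Fin n → ℝ) → ℝ) : Prop :=
  (∀ k i j, ContDiffOn ℝ (⊤ : ℕ∞) (Γ k i j) U) ∧ (∀ k i j x, Γ k i j x = Γ k j i x)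

/-- `γ` is a geodesic of `Γ` on the set `I ⊆ ℝ`, with image in `U`. -/
def IsGeodesicOn {n : ℕ} (U : Set (Fin n → ℝ))
    (Γ : Fin n → Fin n → Fin n → (Fin n → ℝ) → ℝ)
    (I : Set ℝ) (γ : ℝ → Fin n → ℝ) : Prop :=
  (∀ t ∈ I, γ t ∈ U) ∧ ContDiffOn ℝ 2 γ I ∧
    ∀ t ∈ I, ∀ k, deriv (fun s => deriv (fun u => γ u k) s) t +
      ∑ i, ∑ j, Γ k i j (γ t) * deriv (fun u => γ u i) t * deriv (fun u => γ u j) t = 0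

/-- The codimension-one foliation defined by the `1`-form `ω` is totally geodesic for `Γ`:
every geodesic tangent to a leaf at time `0` stays tangent to the kernel of `ω`. -/
def TotallyGeodesic {n : ℕ} (U : Set (Fin n → ℝ))
    (Γ : Fin n → Fin n → Fin n → (Fin n → ℝ) → ℝ)
    (ω : (Fin n → ℝ) → Fin n → ℝ) : Prop :=
  ∀ I : Set ℝ, IsOpen I → I.OrdConnected → (0 : ℝ) ∈ I →
    ∀ γ : ℝ → Fin n → ℝ, IsGeodesicOn U Γ I γ →
      (∑ k, ω (γ 0) k * deriv (fun u => γ u k) 0) = 0 →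
      ∀ t ∈ I, (∑ k, ω (γ t) k * deriv (fun u => γ u k) t) = 0

/-- `ω` is a smooth nonvanishing `1`-form on `U` satisfying the integrability
condition `ω ∧ dω = 0`. -/
def IsFoliationForm {n : ℕ} (U : Set (Fin n → ℝ)) (ω : (Fin n → ℝ) → Fin n → ℝ) : Prop :=
  ContDiffOn ℝ (⊤ : ℕ∞) ω U ∧ (∀ x ∈ U, ω x ≠ 0) ∧
    ∀ x ∈ U, ∀ i j k,
      ω x i * (pd j (fun y => ω y k) x - pd k (fun y => ω y j) x) +
      ω x j * (pd k (fun y => ω y i) x - pd i (fun y => ω y k) x) +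
      ω x k * (pd i (fun y => ω y j) x - pd j (fun y => ω y i) x) = 0

/-- Components of the symmetric covariant differential `d^s_Γ ω`. -/
noncomputable def dsym {n : ℕ} (Γ : Fin n → Fin n → Fin n → (Fin n → ℝ) → ℝ)
    (ω : (Fin n → ℝ) → Fin n → ℝ) (i j : Fin n) (x : Fin n → ℝ) : ℝ :=
  (pd i (fun y => ω y j) x + pd j (fun y => ω y i) x) / 2 - ∑ k, Γ k i j x * ω x k

/-- Components of the symmetric product `θ·ω` of two `1`-forms. -/
noncomputable def symProd {n : ℕ} (θ ω : (Fin n → ℝ) → Fin n → ℝ) (i j : Fin n) (x : Fin n → ℝ) : ℝ :=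
  (θ x i * ω x j + θ x j * ω x i) / 2

/-- A `d`-web of hypersurfaces on `U`: a family of smooth nonvanishing integrable `1`-forms,
any `n` of which are linearly independent at every point of `U`. -/
def IsWeb {n d : ℕ} (U : Set (Fin n → ℝ)) (ωs : Fin d → (Fin n → ℝ) → Fin n → ℝ) : Prop :=
  (∀ i, IsFoliationForm U (ωs i)) ∧
    ∀ x ∈ U, ∀ σ : Fin n → Fin d, Function.Injective σ →
      LinearIndependent ℝ (fun i => ωs (σ i) x)

/-- `Γ` and `Γ'` are projectively equivalent on `U`:
`Γ'ᵏᵢⱼ = Γᵏᵢⱼ + δᵏᵢ ρⱼ + δᵏⱼ ρᵢ` for some smooth `1`-form `ρ`. -/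
def ProjEquiv {n : ℕ} (U : Set (Fin n → ℝ))
    (Γ Γ' : Fin n → Fin n → Fin n → (Fin n → ℝ) → ℝ) : Prop :=
  ∃ ρ : (Fin n → ℝ) → Fin n → ℝ, ContDiffOn ℝ (⊤ : ℕ∞) ρ U ∧
    ∀ x ∈ U, ∀ k i j, Γ' k i j x =
      Γ k i j x + (if k = i then ρ x j else 0) + (if k = j then ρ x i else 0)

/-- `X` is the frame of vector fields dual to the coframe `ωs` on `U`. -/
def IsDualFrame {n : ℕ} (U : Set (Fin n → ℝ)) (ωs : Fin n → (Fin n → ℝ) → Fin n → ℝ)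
    (X : Fin n → (Fin n → ℝ) → Fin n → ℝ) : Prop :=
  (∀ i, ContDiffOn ℝ (⊤ : ℕ∞) (X i) U) ∧
    ∀ x ∈ U, ∀ i j, (∑ k, ωs i x k * X j x k) = if i = j then 1 else 0

/-- The web invariants `s^a_{ij} = (1/(aᵢ−aⱼ))·(aᵢ ∂ⱼ − aⱼ ∂ᵢ) log (aⱼ/aᵢ)`, where `∂ᵢ`
is derivation along the frame vector field `X i`. -/
noncomputable def sInv {n : ℕ} (X : Fin n → (Fin n → ℝ) → Fin n → ℝ)
    (a : Fin n → (Fin n → ℝ) → ℝ) (i j : Fin n) (x : Fin n → ℝ) : ℝ :=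
  (1 / (a i x - a j x)) *
    (a i x * (fderiv ℝ (a j) x (X j x) / a j x - fderiv ℝ (a i) x (X j x) / a i x) -
     a j x * (fderiv ℝ (a j) x (X i x) / a j x - fderiv ℝ (a i) x (X i x) / a i x))

/-- The curvature tensor `Rᵏₗᵢⱼ` of the connection `Γ`. -/
noncomputable def curv {n : ℕ} (Γ : Fin n → Fin n → Fin n → (Fin n → ℝ) → ℝ)
    (k l i j : Fin n) (x : Fin n → ℝ) : ℝ :=
  pd i (Γ k j l) x - pd j (Γ k i l) x +
    ∑ m, (Γ k i m x * Γ m j l x - Γ k j m x * Γ m i l x)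

/-- `y` lies in the leaf through `x` (within `V`) of the foliation defined by `ω`:
it is reachable from `x` by a `C¹` path in `V` everywhere tangent to `ker ω`. -/
def InLeaf {n : ℕ} (V : Set (Fin n → ℝ)) (ω : (Fin n → ℝ) → Fin n → ℝ)
    (x y : Fin n → ℝ) : Prop :=
  ∃ γ : ℝ → Fin n → ℝ, ContDiff ℝ 1 γ ∧ γ 0 = x ∧ γ 1 = y ∧
    (∀ t ∈ Set.Icc (0 : ℝ) 1, γ t ∈ V) ∧
    ∀ t ∈ Set.Icc (0 : ℝ) 1, (∑ k, ω (γ t) k * deriv (fun s => γ s k) t) = 0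

/-!
A foliation `ker θ` is totally geodesic for a torsion-free connection `∇` iff its second fundamental
form, the restriction of `∇θ` to `ker θ`, vanishes. Since `∇θ` changes by a multiple of `θ` on the
diagonal under a projective change of `∇`, we may take `∇` flat. A flat torsion-free connection has
local affine coordinates: by Frobenius `dA = A * G` is solvable, and `A` is then a Jacobian. If
`∇θ` vanishes on `ker θ`, parallel transport along a path in a leaf preserves `ker θ`, so in affine
coordinates this hyperplane is constant along the leaf and the leaf lies in it. Conversely, given
linearizing coordinates `φ`, take `∇` flat with affine coordinates `φ`: differentiating the equation
`c ∘ φ = r` of a leaf twice along a curve in it shows that the second fundamental form vanishes.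
-/

/-! ### Flat connection forms -/

section ParallelTransport

open Set Filter
open scoped unitInterval Topology

variable {E F 𝔸 : Type*} [NormedAddCommGroup E] [NormedSpace ℝ E] [NormedAddCommGroup F]
  [NormedSpace ℝ F] [NormedRing 𝔸] [NormedAlgebra ℝ 𝔸]

/-- The curvature `dG + G ∧ G` of the connection form `G` with values in a Banach algebra. Its
vanishing is the integrability condition of the equation `dA = A * G`. -/
noncomputable def curvatureForm (G : E → E →L[ℝ] 𝔸) (x u v : E) : 𝔸 :=
  fderiv ℝ G x u v - fderiv ℝ G x v u + (G x u * G x v - G x v * G x u)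

/-- A continuous family of linear maps, as a linear map into continuous functions. -/
noncomputable def pointwiseApply {K : Type*} [TopologicalSpace K] [CompactSpace K]
    (c : C(K, E →L[ℝ] F)) : E →L[ℝ] C(K, F) :=
  LinearMap.mkContinuous
    { toFun := fun h => ⟨fun t => c t h, by fun_prop⟩
      map_add' := fun _ _ => by ext; simp
      map_smul' := fun _ _ => by ext; simp } ‖c‖ fun h =>
    (ContinuousMap.norm_le _ (by positivity)).2 fun t =>
      (c t).le_of_opNorm_le (c.norm_coe_le_norm t) h

@[simp]
theorem pointwiseApply_apply {K : Type*} [TopologicalSpace K] [CompactSpace K]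
    (c : C(K, E →L[ℝ] F)) (h : E) (t : K) : pointwiseApply c h t = c t h := rfl

theorem hasFDerivAt_pointwiseApply {K : Type*} [TopologicalSpace K] [CompactSpace K]
    {f : E → C(K, F)} {f' : E × K → E →L[ℝ] F} {c : C(K, E →L[ℝ] F)} {x₀ : E}
    (hf : ∀ᶠ x in 𝓝 x₀, ∀ t, HasFDerivAt (fun y => f y t) (f' (x, t)) x)
    (hf' : ∀ t, ContinuousAt f' (x₀, t)) (hc : ∀ t, c t = f' (x₀, t)) :
    HasFDerivAt f (pointwiseApply c) x₀ := by
  rw [hasFDerivAt_iff_isLittleO, Asymptotics.isLittleO_iff]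
  intro ε hε
  have hclose : ∀ᶠ x in 𝓝 x₀, ∀ t, ‖f' (x, t) - c t‖ ≤ ε := by
    suffices ∀ᶠ x in 𝓝 x₀, ∀ t ∈ univ, ‖f' (x, t) - c t‖ ≤ ε by simpa using this
    refine isCompact_univ.eventually_forall_of_forall_eventually fun t _ => ?_
    have hsub : ContinuousAt (fun q : E × K => ‖f' q - c q.2‖) (x₀, t) :=
      ((hf' t).sub (by fun_prop)).norm
    exact (hsub.eventually_lt_const (by simpa [hc] using hε)).mono fun _ h => h.le
  obtain ⟨r, hr, hball⟩ := Metric.eventually_nhds_iff_ball.1 (hf.and hclose)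
  filter_upwards [Metric.ball_mem_nhds x₀ hr] with x hx
  refine (ContinuousMap.norm_le _ (by positivity)).2 fun t => ?_
  have hmv := (convex_ball x₀ r).norm_image_sub_le_of_norm_hasFDerivWithin_le'
    (fun y hy => ((hball y hy).1 t).hasFDerivWithinAt) (fun y hy => (hball y hy).2 t)
    (Metric.mem_ball_self hr) hx
  simpa using hmv

/-- The primitive vanishing at `0` of a continuous function on the unit interval. -/
noncomputable def primitive : C(I, F) →L[ℝ] C(I, F) :=
  LinearMap.mkContinuous
    { toFun := fun f => ⟨fun t => ∫ s in (0 : ℝ)..t, f.IccExtend zero_le_one s,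
        (intervalIntegral.continuous_primitive
          (fun _ _ => (f.IccExtend zero_le_one).continuous.intervalIntegrable _ _) _).comp
          continuous_subtype_val⟩
      map_add' := fun f g => by
        ext t
        exact intervalIntegral.integral_add
          ((f.IccExtend zero_le_one).continuous.intervalIntegrable _ _)
          ((g.IccExtend zero_le_one).continuous.intervalIntegrable _ _)
      map_smul' := fun c f => by
        ext t
        exact intervalIntegral.integral_smul c _ } 1 fun f =>
    (ContinuousMap.norm_le _ (by positivity)).2 fun t => by
      refine (intervalIntegral.norm_integral_le_of_norm_le_const (C := ‖f‖) fun s _ =>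
        f.norm_coe_le_norm _).trans ?_
      rw [sub_zero, abs_of_nonneg t.2.1, one_mul]
      exact mul_le_of_le_one_right (norm_nonneg f) t.2.2

theorem primitive_apply_eq_sub [CompleteSpace F] {f : C(I, F)} {b : ℝ → F}
    (hb : ∀ t : I, HasDerivAt b (f t) t) (t : I) : primitive f t = b t - b 0 := by
  refine intervalIntegral.integral_eq_sub_of_hasDerivAt (fun s hs => ?_)
    ((f.IccExtend zero_le_one).continuous.intervalIntegrable _ _)
  rw [uIcc_of_le t.2.1] at hs
  have hsI : s ∈ I := ⟨hs.1, hs.2.trans t.2.2⟩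
  simpa [IccExtend_of_mem _ _ hsI] using hb ⟨s, hsI⟩

theorem exists_hasDerivAt_primitive [CompleteSpace F] (f : C(I, F)) :
    ∃ b : ℝ → F, ∀ t : I, b t = primitive f t ∧ HasDerivAt b (f t) t := by
  refine ⟨fun t => ∫ s in (0 : ℝ)..t, f.IccExtend zero_le_one s, fun t => ⟨rfl, ?_⟩⟩
  have hf := (f.IccExtend zero_le_one).continuous
  simpa using intervalIntegral.integral_hasDerivAt_right (hf.intervalIntegrable 0 t)
    (hf.stronglyMeasurableAtFilter _ _) hf.continuousAt

theorem hasFDerivAt_inverse_one_sub_apply [CompleteSpace F] (V : E →L[ℝ] F →L[ℝ] F) {g : E}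
    (hg : IsUnit (1 - V g)) (c : F) :
    HasFDerivAt (fun g => Ring.inverse (1 - V g) c)
      ((Ring.inverse (1 - V g)).comp (V.flip (Ring.inverse (1 - V g) c))) g := by
  obtain ⟨u, hu⟩ := hg
  have hinv := hasFDerivAt_ringInverse (𝕜 := ℝ) u
  rw [hu] at hinv
  have hsub : HasFDerivAt (fun k => 1 - V k) (-V) g := V.hasFDerivAt.const_sub 1
  refine ((hinv.comp g hsub).clm_apply (hasFDerivAt_const c g)).congr_fderiv ?_
  ext k
  simp [← hu]

/-- The operator `a ↦ T (a * g)`; for `T` the primitive on `C(I, 𝔸)` this is the Volterra operator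
with kernel `g`. -/
noncomputable def volterra (T : 𝔸 →L[ℝ] 𝔸) : 𝔸 →L[ℝ] 𝔸 →L[ℝ] 𝔸 :=
  (ContinuousLinearMap.compL ℝ _ _ _ T).comp (ContinuousLinearMap.mul ℝ 𝔸).flip

@[simp]
theorem volterra_apply (T : 𝔸 →L[ℝ] 𝔸) (g a : 𝔸) : volterra T g a = T (a * g) := rfl

/-- The equation `a = b + T (a * g)` is well posed: it is uniquely solvable in `a`, continuously
in `b`. -/
def IsVolterraSolvable (T : 𝔸 →L[ℝ] 𝔸) (g : 𝔸) : Prop :=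
  IsUnit (1 - volterra T g)

/-- The solution operator `b ↦ a` of the equation `a = b + T (a * g)`, a junk value unless the
equation is well posed. -/
noncomputable def solveVolterra (T : 𝔸 →L[ℝ] 𝔸) (g : 𝔸) : 𝔸 →L[ℝ] 𝔸 :=
  Ring.inverse (1 - volterra T g)

/-- The solution of `a = 1 + T (a * g)`; for `T` the primitive on `C(I, 𝔸)` this is the equation of
parallel transport `a' = a * g`, `a 0 = 1`. -/
noncomputable def transport (T : 𝔸 →L[ℝ] 𝔸) (g : 𝔸) : 𝔸 :=
  solveVolterra T g 1

theorem transport_zero (T : 𝔸 →L[ℝ] 𝔸) : transport T 0 = 1 := by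
  simp [transport, solveVolterra]

theorem solveVolterra_apply {T : 𝔸 →L[ℝ] 𝔸} {g a b : 𝔸} (hg : IsVolterraSolvable T g)
    (h : a = b + T (a * g)) : solveVolterra T g b = a := by
  have hb : (1 - volterra T g) a = b := by
    simpa [sub_eq_iff_eq_add] using h
  rw [← hb, solveVolterra, ← mul_apply_eq_comp, Ring.inverse_mul_cancel _ hg]
  rfl

theorem transport_eq_one_add {T : 𝔸 →L[ℝ] 𝔸} {g : 𝔸} (hg : IsVolterraSolvable T g) :
    transport T g = 1 + T (transport T g * g) := by
  have h : (1 - volterra T g) (transport T g) = 1 := by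
    rw [transport, solveVolterra, ← mul_apply_eq_comp, Ring.mul_inverse_cancel _ hg]
    rfl
  simpa [sub_eq_iff_eq_add] using h

theorem eventually_isVolterraSolvable [CompleteSpace 𝔸] {X : Type*} [TopologicalSpace X]
    (T : 𝔸 →L[ℝ] 𝔸) {g : X → 𝔸} {x : X} (hg : ContinuousAt g x) (hgx : g x = 0) :
    ∀ᶠ y in 𝓝 x, IsVolterraSolvable T (g y) := by
  have hcont : ContinuousAt (fun y => 1 - volterra T (g y)) x := by fun_prop
  exact hcont.eventually_mem (Units.isOpen.mem_nhds (by simp [hgx]))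

theorem hasFDerivAt_transport [CompleteSpace 𝔸] {T : 𝔸 →L[ℝ] 𝔸} {g : 𝔸}
    (hg : IsVolterraSolvable T g) :
    HasFDerivAt (transport T) ((solveVolterra T g).comp ((volterra T).flip (transport T g))) g :=
  hasFDerivAt_inverse_one_sub_apply (volterra T) hg 1

/-- In terms of a radial solution `a` of `a' = a * G`, flatness makes the variation of `a` in the
direction `h` equal to `t a(t) G(p + t x)h`: both solve the same inhomogeneous equation. -/
theorem hasDerivAt_smul_mul_of_curvatureForm_eq_zero {G : E → E →L[ℝ] 𝔸} {p x h : E} {a : ℝ → 𝔸}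
    {t : ℝ} (ha : HasDerivAt a (a t * G (p + t • x) x) t)
    (hG : DifferentiableAt ℝ G (p + t • x)) (hflat : curvatureForm G (p + t • x) x h = 0) :
    HasDerivAt (fun t => t • (a t * G (p + t • x) h))
      (a t * (t • fderiv ℝ G (p + t • x) h x + G (p + t • x) h) +
        t • (a t * G (p + t • x) h) * G (p + t • x) x) t := by
  have hline : HasDerivAt (fun t : ℝ => p + t • x) x t := by
    simpa using ((hasDerivAt_id t).smul_const x).const_add p
  have hGt : HasDerivAt (fun t => G (p + t • x) h) (fderiv ℝ G (p + t • x) x h) t := by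
    have := HasDerivAt.clm_apply (c := fun t => G (p + t • x))
      (hG.hasFDerivAt.comp_hasDerivAt t hline) (hasDerivAt_const t h)
    simpa using this
  have hcurv : fderiv ℝ G (p + t • x) x h = fderiv ℝ G (p + t • x) h x -
      (G (p + t • x) x * G (p + t • x) h - G (p + t • x) h * G (p + t • x) x) := by
    rw [eq_sub_iff_add_eq, ← sub_eq_zero, ← hflat, curvatureForm]
    abel
  refine ((hasDerivAt_id t).smul (ha.mul hGt)).congr_deriv ?_
  simp only [id, one_smul, hcurv, mul_add, mul_sub, smul_add, smul_sub, mul_smul_comm,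
    smul_mul_assoc, mul_assoc]
  abel

theorem eq_primitive_add_primitive_of_curvatureForm_eq_zero [CompleteSpace 𝔸]
    {G : E → E →L[ℝ] 𝔸} {p x h : E} {a b g k : C(I, 𝔸)} (ha : a = 1 + primitive (a * g))
    (hG : ∀ t : I, DifferentiableAt ℝ G (p + (t : ℝ) • x))
    (hflat : ∀ t : I, curvatureForm G (p + (t : ℝ) • x) x h = 0)
    (hg : ∀ t : I, g t = G (p + (t : ℝ) • x) x)
    (hk : ∀ t : I, k t = (t : ℝ) • fderiv ℝ G (p + (t : ℝ) • x) h x + G (p + (t : ℝ) • x) h)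
    (hb : ∀ t : I, b t = (t : ℝ) • (a t * G (p + (t : ℝ) • x) h)) :
    b = primitive (a * k) + primitive (b * g) := by
  obtain ⟨a₀, ha₀⟩ := exists_hasDerivAt_primitive (a * g)
  have ha_ext : ∀ t : I, 1 + a₀ t = a t := fun t => by
    rw [(ha₀ t).1]
    exact (DFunLike.congr_fun ha t).symm
  have hderiv : ∀ t : I, HasDerivAt (fun t : ℝ => t • ((1 + a₀ t) * G (p + t • x) h))
      ((a * k + b * g) t) t := fun t => by
    have ha' : HasDerivAt (fun t => 1 + a₀ t) ((1 + a₀ t) * G (p + (t : ℝ) • x) x) t := by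
      rw [ha_ext, ← hg]
      exact (ha₀ t).2.const_add 1
    simpa [hb, ha_ext, hg, hk] using
      hasDerivAt_smul_mul_of_curvatureForm_eq_zero ha' (hG t) (hflat t)
  ext t
  rw [← map_add, primitive_apply_eq_sub hderiv]
  simp [hb, ha_ext]

/-- The connection form `G` evaluated on the velocity of the ray `t ↦ p + t • x`, `0 ≤ t ≤ 1`;
zero where `G` is not continuous along the ray. -/
noncomputable def radialKernel (G : E → E →L[ℝ] 𝔸) (p x : E) : C(I, 𝔸) :=
  ContinuousMap.mkD (fun t : I => G (p + (t : ℝ) • x) x) 0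

section RadialKernel

variable {G : E → E →L[ℝ] 𝔸} {s : Set E} {p x : E}

theorem radialKernel_zero (G : E → E →L[ℝ] 𝔸) (p : E) : radialKernel G p 0 = 0 := by
  ext t
  rw [radialKernel, ContinuousMap.mkD_apply_of_continuous] <;> simp [continuous_const]

theorem radialKernel_apply (hG : ContinuousOn G s) (hx : ∀ t : I, p + (t : ℝ) • x ∈ s) (t : I) :
    radialKernel G p x t = G (p + (t : ℝ) • x) x := by
  refine ContinuousMap.mkD_apply_of_continuous (Continuous.clm_apply ?_ continuous_const)
  exact hG.comp_continuous (by fun_prop) hx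

theorem eventually_forall_add_smul_mem (hs : IsOpen s) (hx : ∀ t : I, p + (t : ℝ) • x ∈ s) :
    ∀ᶠ y in 𝓝 x, ∀ t : I, p + (t : ℝ) • y ∈ s := by
  suffices ∀ᶠ y in 𝓝 x, ∀ t ∈ (univ : Set I), p + (t : ℝ) • y ∈ s by simpa using this
  refine isCompact_univ.eventually_forall_of_forall_eventually fun t _ => ?_
  have hcont : ContinuousAt (fun q : E × I => p + (q.2 : ℝ) • q.1) (x, t) := by fun_prop
  exact hcont.eventually_mem (hs.mem_nhds (hx t))

theorem exists_hasFDerivAt_radialKernel (hs : IsOpen s) (hG : ContDiffOn ℝ 1 G s)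
    (hx : ∀ t : I, p + (t : ℝ) • x ∈ s) :
    ∃ L : E →L[ℝ] C(I, 𝔸), HasFDerivAt (radialKernel G p) L x ∧ ∀ h, ∀ t : I,
      L h t = (t : ℝ) • fderiv ℝ G (p + (t : ℝ) • x) h x + G (p + (t : ℝ) • x) h := by
  set f' : E × I → E →L[ℝ] 𝔸 := fun q =>
    (q.2 : ℝ) • (fderiv ℝ G (p + (q.2 : ℝ) • q.1)).flip q.1 + G (p + (q.2 : ℝ) • q.1) with hf'
  have hf'_cont : ∀ t, ContinuousAt f' (x, t) := fun t => by
    have hmem := hs.mem_nhds (hx t)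
    have hray : ContinuousAt (fun q : E × I => p + (q.2 : ℝ) • q.1) (x, t) := by fun_prop
    have hG_cont := (hG.continuousOn.continuousAt hmem).comp_of_eq hray rfl
    have hDG_cont := ((hG.continuousOn_fderiv_of_isOpen hs le_rfl).continuousAt hmem).comp_of_eq
      hray rfl
    have hflip := (ContinuousLinearMap.flipₗᵢ ℝ E E 𝔸).continuous.continuousAt.comp hDG_cont
    exact ((continuous_subtype_val.comp continuous_snd).continuousAt.smul
      (hflip.clm_apply continuousAt_fst)).add hG_cont
  have hderiv : ∀ᶠ y in 𝓝 x, ∀ t, HasFDerivAt (fun z => radialKernel G p z t) (f' (y, t)) y := by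
    filter_upwards [(eventually_forall_add_smul_mem hs hx).eventually_nhds] with y hy t
    have hray : HasFDerivAt (fun z => p + (t : ℝ) • z) ((t : ℝ) • ContinuousLinearMap.id ℝ E) y :=
      ((hasFDerivAt_id y).const_smul (t : ℝ)).const_add p
    have hGy := ((hG.differentiableOn one_ne_zero).differentiableAt
      (hs.mem_nhds (hy.self_of_nhds t))).hasFDerivAt
    have hGz := (hGy.comp y hray).clm_apply (hasFDerivAt_id y)
    refine (hGz.congr_fderiv ?_).congr_of_eventuallyEq
      (hy.mono fun z hz => radialKernel_apply hG.continuousOn hz t)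
    ext h
    simp [hf', add_comm]
  let c : C(I, E →L[ℝ] 𝔸) := ⟨fun t => f' (x, t), continuous_iff_continuousAt.2 fun t =>
    (hf'_cont t).comp (f := fun t : I => (x, t)) (by fun_prop)⟩
  exact ⟨pointwiseApply c, hasFDerivAt_pointwiseApply hderiv hf'_cont fun _ => rfl,
    fun h t => by simp [c, hf']⟩

theorem hasFDerivAt_transport_radialKernel [CompleteSpace 𝔸] (hs : IsOpen s)
    (hG : ContDiffOn ℝ 1 G s) (hflat : ∀ x ∈ s, ∀ u v, curvatureForm G x u v = 0)
    (hx : ∀ t : I, p + (t : ℝ) • x ∈ s)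
    (hsolv : IsVolterraSolvable primitive (radialKernel G p x)) :
    HasFDerivAt (fun y => transport primitive (radialKernel G p y) 1)
      ((ContinuousLinearMap.mul ℝ 𝔸 (transport primitive (radialKernel G p x) 1)).comp
        (G (p + x))) x := by
  obtain ⟨L, hL, hL_apply⟩ := exists_hasFDerivAt_radialKernel hs hG hx
  have hderiv := (ContinuousMap.evalCLM ℝ (1 : I)).hasFDerivAt.comp x
    ((hasFDerivAt_transport hsolv).comp x hL)
  refine hderiv.congr_fderiv (ContinuousLinearMap.ext fun h => ?_)
  have hG_cont : Continuous fun t : I => G (p + (t : ℝ) • x) h :=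
    (hG.continuousOn.comp_continuous (by fun_prop) hx).clm_apply continuous_const
  set a := transport primitive (radialKernel G p x)
  let b : C(I, 𝔸) := ⟨fun t => (t : ℝ) • (a t * G (p + (t : ℝ) • x) h),
    continuous_subtype_val.smul ((map_continuous a).mul hG_cont)⟩
  have hb : b = primitive (a * L h) + primitive (b * radialKernel G p x) :=
    eq_primitive_add_primitive_of_curvatureForm_eq_zero (transport_eq_one_add hsolv)
      (fun t => (hG.differentiableOn one_ne_zero).differentiableAt (hs.mem_nhds (hx t)))
      (fun t => hflat _ (hx t) x h) (radialKernel_apply hG.continuousOn hx) (hL_apply h)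
      fun t => rfl
  have hb1 := DFunLike.congr_fun (solveVolterra_apply hsolv hb) (1 : I)
  simpa [b] using hb1

end RadialKernel

theorem exists_hasFDerivAt_mul_of_curvatureForm_eq_zero [CompleteSpace 𝔸]
    {G : E → E →L[ℝ] 𝔸} {s : Set E} {p : E} (hs : IsOpen s) (hp : p ∈ s)
    (hG : ContDiffOn ℝ 1 G s) (hflat : ∀ x ∈ s, ∀ u v, curvatureForm G x u v = 0) :
    ∃ A : E → 𝔸, A p = 1 ∧
      ∀ᶠ x in 𝓝 p, HasFDerivAt A ((ContinuousLinearMap.mul ℝ 𝔸 (A x)).comp (G x)) x := by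
  have hp0 : ∀ t : I, p + (t : ℝ) • (0 : E) ∈ s := by simpa using hp
  obtain ⟨L, hL, -⟩ := exists_hasFDerivAt_radialKernel hs hG hp0
  have hsolv := eventually_isVolterraSolvable primitive hL.continuousAt (radialKernel_zero G p)
  refine ⟨fun x => transport primitive (radialKernel G p (x - p)) 1, ?_, ?_⟩
  · simp [radialKernel_zero, transport_zero]
  have htend : Tendsto (fun x => x - p) (𝓝 p) (𝓝 0) := by
    simpa using (continuous_sub_right p).tendsto p
  filter_upwards [htend.eventually hsolv,
    htend.eventually (eventually_forall_add_smul_mem hs hp0)] with x hx_solv hx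
  have hA := (hasFDerivAt_transport_radialKernel hs hG hflat hx hx_solv).comp x
    ((hasFDerivAt_id x).sub_const p)
  rwa [add_sub_cancel, ContinuousLinearMap.comp_id] at hA

end ParallelTransport

/-! ### Affine coordinates -/

section AffineChart

open Set Filter
open scoped Topology

variable {E F : Type*} [NormedAddCommGroup E] [NormedSpace ℝ E] [NormedAddCommGroup F]
  [NormedSpace ℝ F]

theorem contDiffOn_infty_of_hasFDerivAt_mul {𝔸 : Type*} [NormedRing 𝔸] [NormedAlgebra ℝ 𝔸]
    {G : E → E →L[ℝ] 𝔸} {A : E → 𝔸} {s : Set E} (hs : IsOpen s)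
    (hG : ContDiffOn ℝ (⊤ : ℕ∞) G s)
    (hA : ∀ x ∈ s, HasFDerivAt A ((ContinuousLinearMap.mul ℝ 𝔸 (A x)).comp (G x)) x) :
    ContDiffOn ℝ (⊤ : ℕ∞) A s := by
  rw [contDiffOn_infty]
  intro m
  induction m with
  | zero => exact contDiffOn_zero.2 fun x hx => (hA x hx).continuousAt.continuousWithinAt
  | succ m ih =>
    push_cast
    rw [contDiffOn_succ_iff_fderiv_of_isOpen hs]
    refine ⟨fun x hx => (hA x hx).differentiableAt.differentiableWithinAt, by simp, ?_⟩
    have hmul : ContDiffOn ℝ m (fun x => (ContinuousLinearMap.mul ℝ 𝔸 (A x)).comp (G x)) s :=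
      ((ContinuousLinearMap.mul ℝ 𝔸).contDiff.comp_contDiffOn ih).clm_comp
        (hG.of_le (by exact_mod_cast le_top))
    exact hmul.congr fun x hx => (hA x hx).fderiv

/-- The map `φ` is affine on `V` from the torsion-free connection `∂ + G` to the standard flat
connection: `D²φ(u, v) = Dφ(G u v)`. -/
def IsAffineOn (G : E → E →L[ℝ] E →L[ℝ] E) (φ : E → F) (V : Set E) : Prop :=
  ∀ x ∈ V, ∀ u v, fderiv ℝ (fderiv ℝ φ) x u v = fderiv ℝ φ x (G x u v)

section Exists

variable [CompleteSpace E] {G : E → E →L[ℝ] E →L[ℝ] E} {s : Set E} {p : E}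

/-- Frobenius provides a matrix `A` with `dA = A * G`, the would-be Jacobian; `A` is a derivative
because `G` is symmetric. -/
theorem exists_isAffineOn_ball (hs : IsOpen s) (hp : p ∈ s) (hG : ContDiffOn ℝ (⊤ : ℕ∞) G s)
    (hsymm : ∀ x ∈ s, ∀ u v, G x u v = G x v u)
    (hflat : ∀ x ∈ s, ∀ u v, curvatureForm G x u v = 0) :
    ∃ r > 0, Metric.ball p r ⊆ s ∧ ∃ φ : E → E, ContDiffOn ℝ (⊤ : ℕ∞) φ (Metric.ball p r) ∧
      fderiv ℝ φ p = 1 ∧ IsAffineOn G φ (Metric.ball p r) := by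
  obtain ⟨A, hAp, hA⟩ := exists_hasFDerivAt_mul_of_curvatureForm_eq_zero hs hp
    (hG.of_le (by exact_mod_cast le_top)) hflat
  obtain ⟨r, hr, hball⟩ := Metric.eventually_nhds_iff_ball.1 (hA.and (hs.mem_nhds hp))
  have hA_smooth : ContDiffOn ℝ (⊤ : ℕ∞) A (Metric.ball p r) :=
    contDiffOn_infty_of_hasFDerivAt_mul Metric.isOpen_ball
      (hG.mono fun x hx => (hball x hx).2) fun x hx => (hball x hx).1
  obtain ⟨φ, hφ⟩ := (convex_ball p r).exists_forall_hasFDerivAt_of_fderiv_symmetric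
    Metric.isOpen_ball (fun x hx => (hball x hx).1.differentiableAt.differentiableWithinAt)
    (fun x hx u v => by rw [(hball x hx).1.fderiv]; simp [hsymm x (hball x hx).2 u v])
  refine ⟨r, hr, fun x hx => (hball x hx).2, φ, ?_, ?_, fun x hx u v => ?_⟩
  · rw [contDiffOn_infty_iff_fderiv_of_isOpen Metric.isOpen_ball]
    exact ⟨fun x hx => (hφ x hx).differentiableAt.differentiableWithinAt,
      hA_smooth.congr fun x hx => (hφ x hx).fderiv⟩
  · rw [(hφ p (Metric.mem_ball_self hr)).fderiv, hAp]
  · have hDφ : fderiv ℝ φ =ᶠ[𝓝 x] A :=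
      eventually_of_mem (Metric.isOpen_ball.mem_nhds hx) fun y hy => (hφ y hy).fderiv
    rw [hDφ.fderiv_eq, hDφ.eq_of_nhds, (hball x hx).1.fderiv]
    simp

theorem exists_openPartialHomeomorph_of_fderiv_eq_one {φ : E → E} (hs : IsOpen s) (hp : p ∈ s)
    (hφ : ContDiffOn ℝ (⊤ : ℕ∞) φ s) (hφp : fderiv ℝ φ p = 1) :
    ∃ e : OpenPartialHomeomorph E E, p ∈ e.source ∧ e.source ⊆ s ∧ ⇑e = φ ∧
      ContDiffOn ℝ (⊤ : ℕ∞) e.symm e.target := by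
  have hφ_at := hφ.contDiffAt (hs.mem_nhds hp)
  have hDφ : ContinuousOn (fderiv ℝ φ) s := hφ.continuousOn_fderiv_of_isOpen hs (by simp)
  have hunit : IsOpen (s ∩ fderiv ℝ φ ⁻¹' {a | IsUnit a}) :=
    hDφ.isOpen_inter_preimage hs Units.isOpen
  have hderiv : HasFDerivAt φ ((ContinuousLinearEquiv.refl ℝ E : E ≃L[ℝ] E) : E →L[ℝ] E) p := by
    simpa [hφp] using! (hφ_at.differentiableAt (by simp)).hasFDerivAt
  let e₀ := hφ_at.toOpenPartialHomeomorph φ hderiv (by simp)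
  let e := e₀.restr (s ∩ fderiv ℝ φ ⁻¹' {a | IsUnit a})
  have hsource : e.source = e₀.source ∩ (s ∩ fderiv ℝ φ ⁻¹' {a | IsUnit a}) :=
    e₀.restr_source' _ hunit
  refine ⟨e, ?_, fun x hx => (hsource ▸ hx).2.1, rfl, fun y hy => ?_⟩
  · rw [hsource]
    exact ⟨ContDiffAt.mem_toOpenPartialHomeomorph_source _ _ _, hp, by simp [hφp]⟩
  · obtain ⟨hxs, u, hu⟩ := (hsource ▸ e.map_target hy).2
    have hφx := hφ.contDiffAt (hs.mem_nhds hxs)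
    refine (e.contDiffAt_symm (f₀' := ContinuousLinearEquiv.unitsEquiv ℝ E u) hy ?_
      hφx).contDiffWithinAt
    simpa [← hu] using! (hφx.differentiableAt (by simp)).hasFDerivAt

/-- A diffeomorphism between open subsets of `E`, used as a chart. -/
def IsSmoothChart (e : OpenPartialHomeomorph E E) : Prop :=
  ContDiffOn ℝ (⊤ : ℕ∞) e e.source ∧ ContDiffOn ℝ (⊤ : ℕ∞) e.symm e.target

theorem exists_affine_chart (hs : IsOpen s) (hp : p ∈ s) (hG : ContDiffOn ℝ (⊤ : ℕ∞) G s)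
    (hsymm : ∀ x ∈ s, ∀ u v, G x u v = G x v u)
    (hflat : ∀ x ∈ s, ∀ u v, curvatureForm G x u v = 0) :
    ∃ e : OpenPartialHomeomorph E E, p ∈ e.source ∧ e.source ⊆ s ∧
      IsSmoothChart e ∧ IsAffineOn G e e.source := by
  obtain ⟨r, hr, hrs, φ, hφ, hφp, hφ_affine⟩ := exists_isAffineOn_ball hs hp hG hsymm hflat
  obtain ⟨e, hpe, hes, rfl, hesymm⟩ := exists_openPartialHomeomorph_of_fderiv_eq_one
    Metric.isOpen_ball (Metric.mem_ball_self hr) hφ hφp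
  exact ⟨e, hpe, hes.trans hrs, ⟨hφ.mono hes, hesymm⟩, fun x hx => hφ_affine x (hes hx)⟩

end Exists

theorem curvatureForm_eq_zero_of_isAffineOn {G : E → E →L[ℝ] E →L[ℝ] E} {φ : E → F} {V : Set E}
    (hV : IsOpen V) (hφ : ContDiffOn ℝ 3 φ V) (hG : DifferentiableOn ℝ G V)
    (hGφ : IsAffineOn G φ V) {x : E} (hx : x ∈ V) (hinj : Function.Injective (fderiv ℝ φ x))
    (u v : E) : curvatureForm G x u v = 0 := by
  have hDφ : ContDiffAt ℝ 2 (fderiv ℝ φ) x :=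
    (hφ.contDiffAt (hV.mem_nhds hx)).fderiv_right (by norm_num)
  have hDφx := (hDφ.differentiableAt (by simp)).hasFDerivAt
  have hD2φx := ((hDφ.fderiv_right (m := 1) (by norm_num)).differentiableAt (by simp)).hasFDerivAt
  have hGx := (hG.differentiableAt (hV.mem_nhds hx)).hasFDerivAt
  have hD3φ (u v w : E) : fderiv ℝ (fderiv ℝ (fderiv ℝ φ)) x u v w =
      fderiv ℝ φ x (G x u (G x v w) + fderiv ℝ G x u v w) := by
    have hleft := (hD2φx.clm_apply (hasFDerivAt_const v x)).clm_apply (hasFDerivAt_const w x)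
    have hright := hDφx.clm_apply
      ((hGx.clm_apply (hasFDerivAt_const v x)).clm_apply (hasFDerivAt_const w x))
    have heq : (fun y => fderiv ℝ (fderiv ℝ φ) y v w) =ᶠ[𝓝 x] fun y => fderiv ℝ φ y (G y v w) :=
      eventually_of_mem (hV.mem_nhds hx) fun y hy => hGφ y hy v w
    have h := DFunLike.congr_fun (hleft.unique (hright.congr_of_eventuallyEq heq)) u
    simpa [hGφ x hx, add_comm] using h
  ext w
  refine hinj ?_
  have hsymm := DFunLike.congr_fun (hDφ.isSymmSndFDerivAt (by simp) u v) w
  rw [hD3φ, hD3φ, ← sub_eq_zero, ← map_sub] at hsymm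
  rw [zero_apply, map_zero, ← hsymm]
  congr 1
  simp only [curvatureForm, add_apply, sub_apply, mul_apply_eq_comp]
  abel

namespace IsSmoothChart

variable {e : OpenPartialHomeomorph E E} {x : E}

protected theorem symm (he : IsSmoothChart e) : IsSmoothChart e.symm :=
  ⟨he.2, by simpa using he.1⟩

theorem hasFDerivAt (he : IsSmoothChart e) (hx : x ∈ e.source) :
    HasFDerivAt e (fderiv ℝ e x) x :=
  ((he.1.contDiffAt (e.open_source.mem_nhds hx)).differentiableAt (by simp)).hasFDerivAt

theorem fderiv_symm_fderiv_apply (he : IsSmoothChart e) (hx : x ∈ e.source) (v : E) :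
    fderiv ℝ e.symm (e x) (fderiv ℝ e x v) = v := by
  have hcomp := (he.symm.hasFDerivAt (e.map_source hx)).comp x (he.hasFDerivAt hx)
  have hid := hcomp.congr_of_eventuallyEq (f₁ := id)
    ((e.eventually_left_inverse hx).mono fun _ hy => hy.symm)
  exact DFunLike.congr_fun (hid.unique (hasFDerivAt_id x)) v

theorem injective_fderiv (he : IsSmoothChart e) (hx : x ∈ e.source) :
    Function.Injective (fderiv ℝ e x) :=
  Function.LeftInverse.injective (he.fderiv_symm_fderiv_apply hx)

theorem fderiv_fderiv_symm_apply (he : IsSmoothChart e) (hx : x ∈ e.source) (v : E) :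
    fderiv ℝ e x (fderiv ℝ e.symm (e x) v) = v := by
  simpa [e.left_inv hx] using he.symm.fderiv_symm_fderiv_apply (e.map_source hx) v

theorem contDiffOn_fderiv (he : IsSmoothChart e) :
    ContDiffOn ℝ (⊤ : ℕ∞) (fderiv ℝ e) e.source :=
  he.1.fderiv_of_isOpen e.open_source (by simp)

theorem contDiffOn_fderiv_symm (he : IsSmoothChart e) :
    ContDiffOn ℝ (⊤ : ℕ∞) (fun y => fderiv ℝ e.symm (e y)) e.source :=
  he.symm.contDiffOn_fderiv.comp he.1 e.mapsTo

/-- The frame of coordinate vector fields of an affine chart is parallel. -/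
theorem hasFDerivAt_fderiv_symm_apply (he : IsSmoothChart e) {G : E → E →L[ℝ] E →L[ℝ] E}
    (hG : IsAffineOn G e e.source) (hx : x ∈ e.source) (v : E) :
    HasFDerivAt (fun y => fderiv ℝ e.symm (e y) v)
      (-(G x).flip (fderiv ℝ e.symm (e x) v)) x := by
  have hnhds := e.open_source.mem_nhds hx
  have hB := ((he.contDiffOn_fderiv_symm.contDiffAt hnhds).differentiableAt
    (by simp)).hasFDerivAt.clm_apply (hasFDerivAt_const v x)
  have hA := ((he.contDiffOn_fderiv.contDiffAt hnhds).differentiableAt (by simp)).hasFDerivAt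
  have hconst : (fun y => fderiv ℝ e y (fderiv ℝ e.symm (e y) v)) =ᶠ[𝓝 x] fun _ => v :=
    eventually_of_mem hnhds fun y hy => he.fderiv_fderiv_symm_apply hy v
  have hAB := (hA.clm_apply hB).unique ((hasFDerivAt_const v x).congr_of_eventuallyEq hconst)
  refine hB.congr_fderiv (ContinuousLinearMap.ext fun u => ?_)
  refine he.injective_fderiv hx ?_
  rw [neg_apply, ContinuousLinearMap.flip_apply, map_neg, ← hG x hx]
  exact eq_neg_of_add_eq_zero_left (DFunLike.congr_fun hAB u)

end IsSmoothChart

/-- The flat connection whose affine coordinates are given by the chart `e`. It is cut off outside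
the source of `e` so that it is symmetric everywhere. -/
noncomputable def chartConnection (e : OpenPartialHomeomorph E E) : E → E →L[ℝ] E →L[ℝ] E :=
  e.source.indicator fun x =>
    (ContinuousLinearMap.compL ℝ E E E (fderiv ℝ e.symm (e x))).comp (fderiv ℝ (fderiv ℝ e) x)

theorem isAffineOn_chartConnection {e : OpenPartialHomeomorph E E} (he : IsSmoothChart e) :
    IsAffineOn (chartConnection e) e e.source := fun x hx u v => by
  simp [chartConnection, hx, he.fderiv_fderiv_symm_apply hx]

theorem contDiffOn_chartConnection {e : OpenPartialHomeomorph E E} (he : IsSmoothChart e) :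
    ContDiffOn ℝ (⊤ : ℕ∞) (chartConnection e) e.source :=
  (((ContinuousLinearMap.compL ℝ E E E).contDiff.comp_contDiffOn
    he.contDiffOn_fderiv_symm).clm_comp
      (he.contDiffOn_fderiv.fderiv_of_isOpen e.open_source (by simp))).congr
        fun _ hx => indicator_of_mem hx _

theorem chartConnection_apply_comm {e : OpenPartialHomeomorph E E} (he : IsSmoothChart e)
    (x u v : E) : chartConnection e x u v = chartConnection e x v u := by
  by_cases hx : x ∈ e.source
  · have hsymm := (he.1.contDiffAt (e.open_source.mem_nhds hx)).isSymmSndFDerivAt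
      (by rw [minSmoothness_of_isRCLikeNormedField]; exact WithTop.coe_le_coe.2 le_top) u v
    simp [chartConnection, hx, hsymm]
  · simp [chartConnection, hx]

end AffineChart

/-! ### Totally geodesic hyperplane fields -/

section TotallyGeodesicHypersurfaces

open Set Filter
open scoped Topology

theorem eq_zero_of_hasDerivAt_mul {f μ : ℝ → ℝ} {s : Set ℝ} (hs : s.OrdConnected)
    (hμ : ContinuousOn μ s) (hf : ∀ t ∈ s, HasDerivAt f (μ t * f t) t) {a t : ℝ} (ha : a ∈ s)
    (ht : t ∈ s) (hfa : f a = 0) : f t = 0 := by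
  have hts : uIcc a t ⊆ s := hs.uIcc_subset ha ht
  obtain ⟨K, hK⟩ := isCompact_uIcc.exists_bound_of_continuousOn (hμ.mono hts)
  have hlip : ∀ τ ∈ uIcc a t, LipschitzOnWith K.toNNReal (fun x => μ τ * x) univ := fun τ hτ =>
    LipschitzOnWith.of_dist_le' fun x _ y _ => by
      rw [dist_eq_norm, dist_eq_norm, ← mul_sub, norm_mul]
      exact mul_le_mul_of_nonneg_right (hK τ hτ) (norm_nonneg _)
  have hfs : ∀ τ ∈ uIcc a t, HasDerivAt f (μ τ * f τ) τ := fun τ hτ => hf τ (hts hτ)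
  have hzero : ∀ τ, HasDerivAt (fun _ : ℝ => (0 : ℝ)) (μ τ * 0) τ := fun τ => by
    simpa using! hasDerivAt_const τ (0 : ℝ)
  have hcont : ContinuousOn f (uIcc a t) := fun τ hτ => (hfs τ hτ).continuousAt.continuousWithinAt
  rcases le_total a t with hat | hta
  · rw [uIcc_of_le hat] at hlip hfs hcont
    exact ODE_solution_unique_of_mem_Icc_right (fun τ hτ => hlip τ ⟨hτ.1, hτ.2.le⟩) hcont
      (fun τ hτ => (hfs τ ⟨hτ.1, hτ.2.le⟩).hasDerivWithinAt) (fun _ _ => mem_univ _)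
      continuousOn_const (fun τ _ => (hzero τ).hasDerivWithinAt) (fun _ _ => mem_univ _) hfa
      ⟨hat, le_rfl⟩
  · rw [uIcc_of_ge hta] at hlip hfs hcont
    exact ODE_solution_unique_of_mem_Icc_left (fun τ hτ => hlip τ ⟨hτ.1.le, hτ.2⟩) hcont
      (fun τ hτ => (hfs τ ⟨hτ.1.le, hτ.2⟩).hasDerivWithinAt) (fun _ _ => mem_univ _)
      continuousOn_const (fun τ _ => (hzero τ).hasDerivWithinAt) (fun _ _ => mem_univ _) hfa
      ⟨le_rfl, hta⟩

variable {E F : Type*} [NormedAddCommGroup E] [NormedSpace ℝ E] [NormedAddCommGroup F]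
  [NormedSpace ℝ F]

section IntegralCurve

variable [CompleteSpace E] {X : E → E} {s : Set E} {x : E}

theorem exists_integralCurve_mem (hX : ContDiffAt ℝ 1 X x) (hs : s ∈ 𝓝 x) :
    ∃ α : ℝ → E, α 0 = x ∧ ∃ ε > 0, ∀ t ∈ Ioo (-ε) ε, HasDerivAt α (X (α t)) t ∧ α t ∈ s := by
  obtain ⟨α, rfl, ε, hε, hα⟩ :=
    hX.exists_forall_mem_closedBall_exists_eq_forall_mem_Ioo_hasDerivAt₀ 0
  have hα_ev : ∀ᶠ t in 𝓝 0, HasDerivAt α (X (α t)) t :=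
    eventually_of_mem (Ioo_mem_nhds (by linarith) (by linarith)) hα
  obtain ⟨δ, hδ, hball⟩ :=
    Metric.eventually_nhds_iff_ball.1 (hα_ev.and (hα_ev.self_of_nhds.continuousAt hs))
  exact ⟨α, rfl, δ, hδ, fun t ht => hball t (by rwa [Real.ball_eq_Ioo, zero_sub, zero_add])⟩

/-- Oscillating along an integral curve gives a path defined for all time. -/
theorem exists_oscillating_integralCurve (hX : ContDiffAt ℝ 1 X x) (hs : s ∈ 𝓝 x) :
    ∃ γ : ℝ → E, γ 0 = x ∧ ∃ κ : ℝ, ∀ t, HasDerivAt γ (Real.cos (κ * t) • X (γ t)) t ∧ γ t ∈ s := by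
  obtain ⟨α, hα₀, ε, hε, hα⟩ := exists_integralCurve_mem hX hs
  set κ := 2 / ε with hκ
  have hmem (t : ℝ) : κ⁻¹ * Real.sin (κ * t) ∈ Ioo (-ε) ε := by
    rw [hκ, inv_div]
    constructor <;> nlinarith [Real.neg_one_le_sin (2 / ε * t), Real.sin_le_one (2 / ε * t)]
  refine ⟨fun t => α (κ⁻¹ * Real.sin (κ * t)), by simpa using hα₀, κ, fun t =>
    ⟨?_, (hα _ (hmem t)).2⟩⟩
  have hsin : HasDerivAt (fun t => κ⁻¹ * Real.sin (κ * t)) (Real.cos (κ * t)) t := by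
    have hκ₀ : κ ≠ 0 := by positivity
    have h := ((hasDerivAt_id t).const_mul κ).sin.const_mul κ⁻¹
    exact h.congr_deriv (by rw [mul_one, mul_comm, mul_inv_cancel_right₀ hκ₀, id])
  exact (hα _ (hmem t)).1.scomp t hsin

end IntegralCurve

/-- The covariant derivative `(∇_u θ)(v)` of the 1-form `θ` for the connection `∇ = ∂ + G`. -/
noncomputable def covDeriv (G : E → E →L[ℝ] E →L[ℝ] E) (θ : E → E →L[ℝ] ℝ) (x : E) :
    E →L[ℝ] E →L[ℝ] ℝ :=
  fderiv ℝ θ x - (ContinuousLinearMap.compL ℝ E E ℝ (θ x)).comp (G x)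

variable {G : E → E →L[ℝ] E →L[ℝ] E} {θ : E → E →L[ℝ] ℝ} {w : E → E} {V : Set E} {x : E}

theorem covDeriv_apply (u v : E) :
    covDeriv G θ x u v = fderiv ℝ θ x u v - θ x (G x u v) := rfl

theorem continuousOn_covDeriv (hV : IsOpen V) (hG : ContinuousOn G V) (hθ : ContDiffOn ℝ 1 θ V) :
    ContinuousOn (covDeriv G θ) V :=
  (hθ.continuousOn_fderiv_of_isOpen hV le_rfl).sub
    (((ContinuousLinearMap.compL ℝ E E ℝ).continuous.comp_continuousOn hθ.continuousOn).clm_comp hG)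

theorem hasDerivAt_apply_of_parallel {γ ξ : ℝ → E} {γ' : E} {t : ℝ}
    (hθ : DifferentiableAt ℝ θ (γ t)) (hγ : HasDerivAt γ γ' t)
    (hξ : HasDerivAt ξ (-G (γ t) γ' (ξ t)) t) :
    HasDerivAt (fun t => θ (γ t) (ξ t)) (covDeriv G θ (γ t) γ' (ξ t)) t :=
  ((hθ.hasFDerivAt.comp_hasDerivAt t hγ).clm_apply hξ).congr_deriv <| by
    simp [covDeriv_apply, sub_eq_add_neg]

section Kernel

variable {S : E →L[ℝ] E →L[ℝ] ℝ} {ℓ : E →L[ℝ] ℝ} {z : E}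

theorem apply_eq_mul_of_vanishing_on_ker (hz : ℓ z = 1)
    (hS : ∀ u v, ℓ u = 0 → ℓ v = 0 → S u v = 0) {u : E} (hu : ℓ u = 0) (v : E) :
    S u v = S u z * ℓ v := by
  have h := hS u (v - ℓ v • z) hu (by simp [hz])
  simp only [map_sub, map_smul, smul_eq_mul] at h
  linarith

theorem apply_self_eq_mul_of_vanishing_on_ker (hz : ℓ z = 1) (hS : ∀ v, ℓ v = 0 → S v v = 0)
    (v : E) : S v v = (S z v + S v z - S z z * ℓ v) * ℓ v := by
  have h := hS (v - ℓ v • z) (by simp [hz])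
  simp only [map_sub, map_smul, sub_apply, smul_apply, smul_eq_mul] at h
  linarith

theorem eq_zero_of_forall_ker {ℓ' : E →L[ℝ] ℝ} (hz : ℓ z = 1) (hker : ∀ v, ℓ v = 0 → ℓ' v = 0)
    (hne : ℓ' ≠ 0) {v : E} (hv : ℓ' v = 0) : ℓ v = 0 := by
  have hℓ' (u : E) : ℓ' u = ℓ u * ℓ' z := by
    have h := hker (u - ℓ u • z) (by simp [hz])
    simp only [map_sub, map_smul, smul_eq_mul] at h
    linarith
  have hz' : ℓ' z ≠ 0 := fun h => hne (ContinuousLinearMap.ext fun u => by simp [hℓ' u, h])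
  exact (mul_eq_zero.1 ((hℓ' v).symm.trans hv)).resolve_right hz'

end Kernel

section Transport

variable {s : Set ℝ} {γ γ' ξ : ℝ → E} {a t : ℝ}

theorem apply_eq_zero_of_parallel (hV : IsOpen V) (hG : ContinuousOn G V)
    (hθ : ContDiffOn ℝ 1 θ V) (hw : ContinuousOn w V) (hθw : ∀ x ∈ V, θ x (w x) = 1)
    (hgeo : ∀ x ∈ V, ∀ u v, θ x u = 0 → θ x v = 0 → covDeriv G θ x u v = 0)
    (hs : s.OrdConnected) (hγV : MapsTo γ s V) (hγ : ∀ t ∈ s, HasDerivAt γ (γ' t) t)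
    (hγ' : ContinuousOn γ' s) (htan : ∀ t ∈ s, θ (γ t) (γ' t) = 0)
    (hξ : ∀ t ∈ s, HasDerivAt ξ (-G (γ t) (γ' t) (ξ t)) t) (ha : a ∈ s) (ht : t ∈ s)
    (hξa : θ (γ a) (ξ a) = 0) : θ (γ t) (ξ t) = 0 := by
  have hγc : ContinuousOn γ s := fun t ht => (hγ t ht).continuousAt.continuousWithinAt
  refine eq_zero_of_hasDerivAt_mul (f := fun t => θ (γ t) (ξ t))
    (μ := fun t => covDeriv G θ (γ t) (γ' t) (w (γ t))) hs
    ((((continuousOn_covDeriv hV hG hθ).comp hγc hγV).clm_apply hγ').clm_apply (hw.comp hγc hγV))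
    (fun t ht => ?_) ha ht hξa
  have hθt := (hθ.contDiffAt (hV.mem_nhds (hγV ht))).differentiableAt one_ne_zero
  refine (hasDerivAt_apply_of_parallel hθt (hγ t ht) (hξ t ht)).congr_deriv ?_
  exact apply_eq_mul_of_vanishing_on_ker (hθw _ (hγV ht)) (hgeo _ (hγV ht)) (htan t ht) _

theorem apply_velocity_eq_zero_of_geodesic (hV : IsOpen V) (hG : ContinuousOn G V)
    (hθ : ContDiffOn ℝ 1 θ V) (hw : ContinuousOn w V) (hθw : ∀ x ∈ V, θ x (w x) = 1)
    (hgeo : ∀ x ∈ V, ∀ v, θ x v = 0 → covDeriv G θ x v v = 0)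
    (hs : s.OrdConnected) (hγV : MapsTo γ s V) (hγ : ∀ t ∈ s, HasDerivAt γ (γ' t) t)
    (hγ' : ∀ t ∈ s, HasDerivAt γ' (-G (γ t) (γ' t) (γ' t)) t) (ha : a ∈ s) (ht : t ∈ s)
    (hγa : θ (γ a) (γ' a) = 0) : θ (γ t) (γ' t) = 0 := by
  have hγc : ContinuousOn γ s := fun t ht => (hγ t ht).continuousAt.continuousWithinAt
  have hγ'c : ContinuousOn γ' s := fun t ht => (hγ' t ht).continuousAt.continuousWithinAt
  have hSc := (continuousOn_covDeriv hV hG hθ).comp hγc hγV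
  have hwc := hw.comp hγc hγV
  have hθc := hθ.continuousOn.comp hγc hγV
  refine eq_zero_of_hasDerivAt_mul (f := fun t => θ (γ t) (γ' t))
    (μ := fun t => covDeriv G θ (γ t) (w (γ t)) (γ' t) + covDeriv G θ (γ t) (γ' t) (w (γ t)) -
      covDeriv G θ (γ t) (w (γ t)) (w (γ t)) * θ (γ t) (γ' t)) hs
    ((((hSc.clm_apply hwc).clm_apply hγ'c).add ((hSc.clm_apply hγ'c).clm_apply hwc)).sub
      (((hSc.clm_apply hwc).clm_apply hwc).mul (hθc.clm_apply hγ'c)))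
    (fun t ht => ?_) ha ht hγa
  have hθt := (hθ.contDiffAt (hV.mem_nhds (hγV ht))).differentiableAt one_ne_zero
  refine (hasDerivAt_apply_of_parallel hθt (hγ t ht) (hγ' t ht)).congr_deriv ?_
  exact apply_self_eq_mul_of_vanishing_on_ker (hθw _ (hγV ht)) (hgeo _ (hγV ht)) _

/-- The tangent hyperplane `ker θ` is parallel along a path tangent to it, so in affine coordinates
it is constant along the path. -/
theorem apply_chart_eq_of_tangent_path {e : OpenPartialHomeomorph E E} (he : IsSmoothChart e)
    (hGe : IsAffineOn G e e.source) (hG : ContinuousOn G e.source)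
    (hθ : ContDiffOn ℝ 1 θ e.source) (hw : ContinuousOn w e.source)
    (hθw : ∀ x ∈ e.source, θ x (w x) = 1)
    (hgeo : ∀ x ∈ e.source, ∀ u v, θ x u = 0 → θ x v = 0 → covDeriv G θ x u v = 0) {b : ℝ}
    (hab : a ≤ b) (hγV : MapsTo γ (Icc a b) e.source) (hγ : ∀ t ∈ Icc a b, HasDerivAt γ (γ' t) t)
    (hγ' : ContinuousOn γ' (Icc a b)) (htan : ∀ t ∈ Icc a b, θ (γ t) (γ' t) = 0) :
    θ (γ a) (fderiv ℝ e.symm (e (γ a)) (e (γ b))) =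
      θ (γ a) (fderiv ℝ e.symm (e (γ a)) (e (γ a))) := by
  set c := (θ (γ a)).comp (fderiv ℝ e.symm (e (γ a)))
  have hderiv : ∀ t ∈ Icc a b, HasDerivAt (fun t => c (e (γ t))) 0 t := by
    intro t ht
    set v := fderiv ℝ e (γ t) (γ' t) with hv
    have hparallel : ∀ τ ∈ Icc a b, HasDerivAt (fun τ => fderiv ℝ e.symm (e (γ τ)) v)
        (-G (γ τ) (γ' τ) (fderiv ℝ e.symm (e (γ τ)) v)) τ := fun τ hτ =>
      (he.hasFDerivAt_fderiv_symm_apply hGe (hγV hτ) v).comp_hasDerivAt τ (hγ τ hτ)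
    have hcv : c v = 0 := apply_eq_zero_of_parallel e.open_source hG hθ hw hθw hgeo ordConnected_Icc
      hγV hγ hγ' htan hparallel ht (left_mem_Icc.2 hab)
      (by rw [hv, he.fderiv_symm_fderiv_apply (hγV ht), htan t ht])
    exact (c.hasFDerivAt.comp_hasDerivAt t
      ((he.hasFDerivAt (hγV ht)).comp_hasDerivAt t (hγ t ht))).congr_deriv hcv
  exact constant_of_has_deriv_right_zero
    (fun t ht => (hderiv t ht).continuousAt.continuousWithinAt)
    (fun t ht => (hderiv t (Ico_subset_Icc_self ht)).hasDerivWithinAt) b (right_mem_Icc.2 hab)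

end Transport

section TangentCurves

theorem fderiv_apply_add_eq_zero_of_tangent {γ γ' : ℝ → E} {γ'' : E} {t : ℝ}
    (hθ : DifferentiableAt ℝ θ (γ t)) (hγ : HasDerivAt γ (γ' t) t) (hγ' : HasDerivAt γ' γ'' t)
    (htan : ∀ᶠ τ in 𝓝 t, θ (γ τ) (γ' τ) = 0) :
    fderiv ℝ θ (γ t) (γ' t) (γ' t) + θ (γ t) γ'' = 0 :=
  ((hθ.hasFDerivAt.comp_hasDerivAt t hγ).clm_apply hγ').unique
    ((hasDerivAt_const t (0 : ℝ)).congr_of_eventuallyEq htan)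

/-- If the level set of `c ∘ φ` contains a curve tangent to `ker θ` in each tangent direction, then
`ker θ = ker (c ∘ Dφ)` at `x`, and differentiating `c ∘ φ` twice along such a curve computes the
second fundamental form of `ker θ`. -/
theorem covDeriv_apply_self_eq_zero_of_tangent_curves {φ : E → F} {c : F →L[ℝ] ℝ} {z : E}
    (hV : IsOpen V) (hx : x ∈ V) (hφ : ContDiffOn ℝ 2 φ V) (hGφ : IsAffineOn G φ V)
    (hθ : DifferentiableAt ℝ θ x) (hz : θ x z = 1) (hc : c.comp (fderiv ℝ φ x) ≠ 0)
    (hcurve : ∀ v, θ x v = 0 → ∃ γ γ' : ℝ → E, γ 0 = x ∧ γ' 0 = v ∧ (∀ t, HasDerivAt γ (γ' t) t) ∧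
      DifferentiableAt ℝ γ' 0 ∧ (∀ t, γ t ∈ V) ∧ (∀ t, θ (γ t) (γ' t) = 0) ∧
      ∀ t, c (φ (γ t)) = c (φ x)) {v : E} (hv : θ x v = 0) : covDeriv G θ x v v = 0 := by
  have hDφ : ∀ y ∈ V, HasFDerivAt φ (fderiv ℝ φ y) y := fun y hy =>
    ((hφ.contDiffAt (hV.mem_nhds hy)).differentiableAt two_ne_zero).hasFDerivAt
  have hlevel {γ γ' : ℝ → E} (hγ : ∀ t, HasDerivAt γ (γ' t) t) (hγV : ∀ t, γ t ∈ V)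
      (hγc : ∀ t, c (φ (γ t)) = c (φ x)) (t : ℝ) : c.comp (fderiv ℝ φ (γ t)) (γ' t) = 0 :=
    (c.hasFDerivAt.comp_hasDerivAt t ((hDφ _ (hγV t)).comp_hasDerivAt t (hγ t))).unique
      ((hasDerivAt_const t (c (φ x))).congr_of_eventuallyEq (.of_forall hγc))
  have hker : ∀ u, θ x u = 0 → c.comp (fderiv ℝ φ x) u = 0 := by
    intro u hu
    obtain ⟨γ, γ', rfl, rfl, hγ, -, hγV, -, hγc⟩ := hcurve u hu
    exact hlevel hγ hγV hγc 0
  obtain ⟨γ, γ', rfl, rfl, hγ, hγ', hγV, htan, hγc⟩ := hcurve v hv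
  have hD2φ : HasFDerivAt (fderiv ℝ φ) (fderiv ℝ (fderiv ℝ φ) (γ 0)) (γ 0) :=
    (((hφ.contDiffAt (hV.mem_nhds hx)).fderiv_right (m := 1) (by norm_num)).differentiableAt
      one_ne_zero).hasFDerivAt
  have hDcφ : HasFDerivAt (fun y => c.comp (fderiv ℝ φ y)) _ (γ 0) :=
    (ContinuousLinearMap.compL ℝ E F ℝ c).hasFDerivAt.comp (γ 0) hD2φ
  have hφ_second := fderiv_apply_add_eq_zero_of_tangent hDcφ.differentiableAt (hγ 0)
    hγ'.hasDerivAt (.of_forall (hlevel hγ hγV hγc))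
  have hθ_second := fderiv_apply_add_eq_zero_of_tangent hθ (hγ 0) hγ'.hasDerivAt (.of_forall htan)
  have hacc : θ (γ 0) (G (γ 0) (γ' 0) (γ' 0) + deriv γ' 0) = 0 := by
    refine eq_zero_of_forall_ker hz hker hc ?_
    rw [hDcφ.fderiv] at hφ_second
    simpa [hGφ _ hx] using hφ_second
  rw [map_add] at hacc
  rw [covDeriv_apply]
  linarith

theorem exists_tangent_curve [CompleteSpace E] (hV : IsOpen V) (hx : x ∈ V)
    (hθ : ContDiffOn ℝ 1 θ V) (hw : ContDiffOn ℝ 1 w V) (hθw : ∀ x ∈ V, θ x (w x) = 1) {v : E}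
    (hv : θ x v = 0) : ∃ γ γ' : ℝ → E, γ 0 = x ∧ γ' 0 = v ∧ (∀ t, HasDerivAt γ (γ' t) t) ∧
      Continuous γ' ∧ DifferentiableAt ℝ γ' 0 ∧ (∀ t, γ t ∈ V) ∧ ∀ t, θ (γ t) (γ' t) = 0 := by
  set X : E → E := fun y => v - θ y v • w y with hX_def
  have hX : ContDiffOn ℝ 1 X V :=
    contDiffOn_const.sub ((hθ.clm_apply contDiffOn_const).smul hw)
  obtain ⟨γ, rfl, κ, hγ⟩ :=
    exists_oscillating_integralCurve (hX.contDiffAt (hV.mem_nhds hx)) (hV.mem_nhds hx)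
  have hγc : Continuous γ := continuous_iff_continuousAt.2 fun t => (hγ t).1.continuousAt
  have hX0 : DifferentiableAt ℝ X (γ 0) :=
    (hX.contDiffAt (hV.mem_nhds hx)).differentiableAt one_ne_zero
  refine ⟨γ, fun t => Real.cos (κ * t) • X (γ t), rfl, by simp [hX_def, hv], fun t => (hγ t).1, ?_,
    ?_, fun t => (hγ t).2, fun t => by simp [hX_def, hθw _ (hγ t).2]⟩
  · exact (by fun_prop : Continuous fun t => Real.cos (κ * t)).smul
      (hX.continuousOn.comp_continuous hγc fun t => (hγ t).2)
  · exact (by fun_prop : DifferentiableAt ℝ (fun t => Real.cos (κ * t)) 0).smul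
      (hX0.comp 0 (hγ 0).1.differentiableAt)

end TangentCurves

end TotallyGeodesicHypersurfaces

/-! ### Forms and connections in components -/

section Coordinates

open Set Filter
open scoped Topology

variable {n : ℕ}

theorem eq_zero_of_forall_single {M : Type*} [AddCommGroup M] [Module ℝ M]
    {f : (Fin n → ℝ) → (Fin n → ℝ) → (Fin n → ℝ) → M} (hf₁ : ∀ v w, IsLinearMap ℝ (f · v w))
    (hf₂ : ∀ u w, IsLinearMap ℝ (f u · w)) (hf₃ : ∀ u v, IsLinearMap ℝ (f u v ·))
    (hf : ∀ i j k, f (Pi.single i 1) (Pi.single j 1) (Pi.single k 1) = 0) (u v w : Fin n → ℝ) :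
    f u v w = 0 := by
  have hext {g : (Fin n → ℝ) → M} (hg : IsLinearMap ℝ g) (hg₀ : ∀ i, g (Pi.single i 1) = 0)
      (z : Fin n → ℝ) : g z = 0 := by
    have h : hg.mk' g = 0 := LinearMap.pi_ext' fun i => LinearMap.ext_ring (by simpa using hg₀ i)
    exact DFunLike.congr_fun h z
  exact hext (hf₁ v w) (fun i => hext (hf₂ _ w) (fun j => hext (hf₃ _ _) (hf i j) w) v) u

theorem pd_apply {ω : (Fin n → ℝ) → Fin n → ℝ} {x : Fin n → ℝ} (hω : DifferentiableAt ℝ ω x)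
    (i k : Fin n) : pd i (fun y => ω y k) x = fderiv ℝ ω x (Pi.single i 1) k := by
  rw [pd, (hasFDerivAt_pi'.1 hω.hasFDerivAt k).fderiv]
  rfl

/-- The linear form with components `a`, as a continuous linear function of `a`. -/
noncomputable def covector : (Fin n → ℝ) →L[ℝ] (Fin n → ℝ) →L[ℝ] ℝ :=
  (dotProductBilin ℝ ℝ).toContinuousBilinearMap

theorem covector_apply (a v : Fin n → ℝ) : covector a v = ∑ k, a k * v k := rfl

theorem covector_single (a : Fin n → ℝ) (k : Fin n) : covector a (Pi.single k 1) = a k :=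
  dotProduct_single_one a k

theorem covector_components (c : (Fin n → ℝ) →L[ℝ] ℝ) :
    covector (fun k => c (Pi.single k 1)) = c :=
  ContinuousLinearMap.coe_injective <| LinearMap.pi_ext' fun k => LinearMap.ext_ring <| by
    simp [covector_single]

theorem sum_apply_single_mul (c : (Fin n → ℝ) →L[ℝ] ℝ) (v : Fin n → ℝ) :
    ∑ k, c (Pi.single k 1) * v k = c v :=
  DFunLike.congr_fun (covector_components c) v

theorem covector_ne_zero {a : Fin n → ℝ} (ha : a ≠ 0) : covector a ≠ 0 := fun h =>
  ha (funext fun k => (covector_single a k).symm.trans (DFunLike.congr_fun h _))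

/-- The 1-form with component functions `ω`. -/
noncomputable def oneForm (ω : (Fin n → ℝ) → Fin n → ℝ) (x : Fin n → ℝ) : (Fin n → ℝ) →L[ℝ] ℝ :=
  covector (ω x)

/-- The multiple of the Euclidean normal of `ker ω` on which `ω` takes the value `1`. -/
noncomputable def normalField (ω : (Fin n → ℝ) → Fin n → ℝ) (x : Fin n → ℝ) : Fin n → ℝ :=
  (covector (ω x) (ω x))⁻¹ • ω x

namespace IsFoliationForm

variable {U V : Set (Fin n → ℝ)} {ω : (Fin n → ℝ) → Fin n → ℝ} {x : Fin n → ℝ}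

theorem mono (h : IsFoliationForm U ω) (hVU : V ⊆ U) : IsFoliationForm V ω :=
  ⟨h.1.mono hVU, fun x hx => h.2.1 x (hVU hx), fun x hx => h.2.2 x (hVU hx)⟩

theorem contDiffOn_oneForm (h : IsFoliationForm U ω) : ContDiffOn ℝ (⊤ : ℕ∞) (oneForm ω) U :=
  covector.contDiff.comp_contDiffOn h.1

theorem covector_self_ne_zero (h : IsFoliationForm U ω) (hx : x ∈ U) :
    covector (ω x) (ω x) ≠ 0 :=
  fun h₀ => h.2.1 x hx (dotProduct_self_eq_zero.1 h₀)

theorem contDiffOn_normalField (h : IsFoliationForm U ω) :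
    ContDiffOn ℝ (⊤ : ℕ∞) (normalField ω) U :=
  ((h.contDiffOn_oneForm.clm_apply h.1).inv fun _ => h.covector_self_ne_zero).smul h.1

theorem oneForm_normalField (h : IsFoliationForm U ω) (hx : x ∈ U) :
    oneForm ω x (normalField ω x) = 1 := by
  rw [oneForm, normalField, map_smul, smul_eq_mul, inv_mul_cancel₀ (h.covector_self_ne_zero hx)]

theorem differentiableAt (h : IsFoliationForm U ω) (hU : IsOpen U) (hx : x ∈ U) :
    DifferentiableAt ℝ ω x :=
  (h.1.contDiffAt (hU.mem_nhds hx)).differentiableAt (by simp)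

theorem fderiv_oneForm_apply_comm (h : IsFoliationForm U ω) (hU : IsOpen U) (hx : x ∈ U)
    {u v : Fin n → ℝ} (hu : oneForm ω x u = 0) (hv : oneForm ω x v = 0) :
    fderiv ℝ (oneForm ω) x u v = fderiv ℝ (oneForm ω) x v u := by
  have hω := h.differentiableAt hU hx
  set θ := oneForm ω x with hθ
  set Dθ := fderiv ℝ (oneForm ω) x with hDθ
  have hDθ_apply (u v) : Dθ u v = covector (fderiv ℝ ω x u) v := by
    have hDω : HasFDerivAt (oneForm ω) (covector.comp (fderiv ℝ ω x)) x :=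
      covector.hasFDerivAt.comp x hω.hasFDerivAt
    rw [hDθ, hDω.fderiv]
    rfl
  have hwedge : ∀ u v w, θ u * (Dθ v w - Dθ w v) + θ v * (Dθ w u - Dθ u w) +
      θ w * (Dθ u v - Dθ v u) = 0 := by
    refine eq_zero_of_forall_single (fun v w => ⟨fun a b => ?_, fun c a => ?_⟩)
      (fun u w => ⟨fun a b => ?_, fun c a => ?_⟩) (fun u v => ⟨fun a b => ?_, fun c a => ?_⟩)
      (fun i j k => ?_)
    case refine_7 =>
      simpa only [hθ, oneForm, hDθ_apply, covector_single, pd_apply hω] using h.2.2 x hx i j k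
    all_goals simp only [map_add, map_smul, add_apply, smul_apply, smul_eq_mul]; ring
  have h₁ := hwedge (normalField ω x) u v
  rw [hu, hv, hθ, h.oneForm_normalField hx] at h₁
  linarith

end IsFoliationForm

/-- The Christoffel symbols of the connection `∂ + G`. -/
noncomputable def christoffel (G : (Fin n → ℝ) → (Fin n → ℝ) →L[ℝ] (Fin n → ℝ) →L[ℝ] (Fin n → ℝ))
    (k i j : Fin n) (x : Fin n → ℝ) : ℝ :=
  G x (Pi.single i 1) (Pi.single j 1) k

theorem christoffel_surjective : Function.Surjective (christoffel (n := n)) := by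
  intro Γ
  let T (k i j : Fin n) : (Fin n → ℝ) →L[ℝ] (Fin n → ℝ) →L[ℝ] (Fin n → ℝ) :=
    (ContinuousLinearMap.proj i).smulRight
      ((ContinuousLinearMap.proj (R := ℝ) (φ := fun _ : Fin n => ℝ) j).smulRight (Pi.single k 1))
  refine ⟨fun x => ∑ k, ∑ i, ∑ j, Γ k i j x • T k i j, ?_⟩
  funext k i j x
  simp [christoffel, T, Pi.single_apply]

variable {G : (Fin n → ℝ) → (Fin n → ℝ) →L[ℝ] (Fin n → ℝ) →L[ℝ] (Fin n → ℝ)}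
  {V : Set (Fin n → ℝ)} {x : Fin n → ℝ}

theorem sum_christoffel_mul (x u v : Fin n → ℝ) (k : Fin n) :
    ∑ i, ∑ j, christoffel G k i j x * u i * v j = G x u v k := by
  let proj : (Fin n → ℝ) →L[ℝ] ℝ := ContinuousLinearMap.proj k
  calc ∑ i, ∑ j, christoffel G k i j x * u i * v j
      = ∑ i, (∑ j, proj.comp (G x (Pi.single i 1)) (Pi.single j 1) * v j) * u i := by
        simp only [Finset.sum_mul, mul_right_comm]; rfl
    _ = ∑ i, proj.comp ((G x).flip v) (Pi.single i 1) * u i := by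
        refine Finset.sum_congr rfl fun i _ => ?_
        rw [sum_apply_single_mul]
        rfl
    _ = G x u v k := sum_apply_single_mul _ u

theorem isTorsionFreeConn_christoffel_iff :
    IsTorsionFreeConn V (christoffel G) ↔
      ContDiffOn ℝ (⊤ : ℕ∞) G V ∧ ∀ x u v, G x u v = G x v u := by
  refine ⟨fun h => ⟨?_, fun x u v => funext fun k => ?_⟩, fun h => ⟨fun k i j => ?_, ?_⟩⟩
  · simp only [contDiffOn_clm_apply, contDiffOn_pi, ← sum_christoffel_mul]
    exact fun u v k => ContDiffOn.sum fun i _ => ContDiffOn.sum fun j _ =>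
      ((h.1 k i j).mul contDiffOn_const).mul contDiffOn_const
  · rw [← sum_christoffel_mul, ← sum_christoffel_mul, Finset.sum_comm]
    simp only [h.2 k, mul_right_comm]
  · exact contDiffOn_pi.1 ((h.1.clm_apply contDiffOn_const).clm_apply contDiffOn_const) k
  · exact fun k i j x => congrFun (h.2 x _ _) k

theorem pd_christoffel (hG : DifferentiableAt ℝ G x) (i j k l : Fin n) :
    pd i (christoffel G k j l) x =
      fderiv ℝ G x (Pi.single i 1) (Pi.single j 1) (Pi.single l 1) k := by
  have hGjl : HasFDerivAt (fun y => G y (Pi.single j 1) (Pi.single l 1)) _ x :=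
    (hG.hasFDerivAt.clm_apply (hasFDerivAt_const _ x)).clm_apply (hasFDerivAt_const _ x)
  refine (pd_apply hGjl.differentiableAt i k).trans ?_
  rw [hGjl.fderiv]
  simp

theorem curv_christoffel (hG : DifferentiableAt ℝ G x) (k l i j : Fin n) :
    curv (christoffel G) k l i j x =
      curvatureForm G x (Pi.single i 1) (Pi.single j 1) (Pi.single l 1) k := by
  have hsum (i j : Fin n) : ∑ m, christoffel G k i m x * christoffel G m j l x =
      G x (Pi.single i 1) (G x (Pi.single j 1) (Pi.single l 1)) k :=
    sum_apply_single_mul ((ContinuousLinearMap.proj k).comp (G x (Pi.single i 1))) _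
  rw [curv, Finset.sum_sub_distrib, hsum, hsum, pd_christoffel hG, pd_christoffel hG]
  rfl

theorem curv_christoffel_eq_zero_iff (hG : DifferentiableAt ℝ G x) :
    (∀ k l i j, curv (christoffel G) k l i j x = 0) ↔ ∀ u v, curvatureForm G x u v = 0 := by
  refine ⟨fun h u v => ContinuousLinearMap.ext fun w => ?_, fun h k l i j => by
    rw [curv_christoffel hG, h]; rfl⟩
  refine eq_zero_of_forall_single (f := fun u v w => curvatureForm G x u v w)
    (fun v w => ⟨fun a b => ?_, fun c a => ?_⟩) (fun u w => ⟨fun a b => ?_, fun c a => ?_⟩)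
    (fun u v => (curvatureForm G x u v).isLinear) (fun i j l => funext fun k => ?_) u v w
  case refine_5 => rw [← curv_christoffel hG, h]; rfl
  all_goals
    simp only [curvatureForm, map_add, map_smul, add_apply, sub_apply, smul_apply,
      mul_apply_eq_comp]
    module

end Coordinates

/-! ### Totally geodesic foliations -/

section Foliations

open Set Filter
open scoped Topology

variable {n : ℕ} {G G₀ : (Fin n → ℝ) → (Fin n → ℝ) →L[ℝ] (Fin n → ℝ) →L[ℝ] (Fin n → ℝ)}
  {Γ Γ₀ : Fin n → Fin n → Fin n → (Fin n → ℝ) → ℝ} {U V : Set (Fin n → ℝ)}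
  {ω : (Fin n → ℝ) → Fin n → ℝ} {x : Fin n → ℝ}

theorem oneForm_apply_hasDerivAt {γ : ℝ → Fin n → ℝ} {γ' : Fin n → ℝ} {t : ℝ}
    (hγ : HasDerivAt γ γ' t) :
    oneForm ω (γ t) γ' = ∑ k, ω (γ t) k * deriv (fun u => γ u k) t := by
  simp only [oneForm, covector_apply, (hasDerivAt_pi.1 hγ _).deriv]

section Geodesics

variable {I : Set ℝ} {γ γ' : ℝ → Fin n → ℝ} {t : ℝ}

theorem hasDerivAt_deriv_of_contDiffOn_two {E : Type*} [NormedAddCommGroup E] [NormedSpace ℝ E]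
    {γ : ℝ → E} (hγ : ContDiffOn ℝ 2 γ I) (hI : IsOpen I) (ht : t ∈ I) :
    HasDerivAt γ (deriv γ t) t ∧ HasDerivAt (deriv γ) (deriv (deriv γ) t) t := by
  rw [show (2 : WithTop ℕ∞) = 1 + 1 by norm_num, contDiffOn_succ_iff_deriv_of_isOpen hI] at hγ
  exact ⟨(hγ.1.differentiableAt (hI.mem_nhds ht)).hasDerivAt,
    ((hγ.2.2.differentiableOn one_ne_zero).differentiableAt (hI.mem_nhds ht)).hasDerivAt⟩

theorem contDiffOn_succ_of_hasDerivAt {E : Type*} [NormedAddCommGroup E] [NormedSpace ℝ E]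
    {γ γ' : ℝ → E} (hI : IsOpen I) (hγ : ∀ t ∈ I, HasDerivAt γ (γ' t) t) {m : ℕ}
    (hγ' : ContDiffOn ℝ m γ' I) : ContDiffOn ℝ (m + 1 : ℕ) γ I := by
  rw [Nat.cast_add, Nat.cast_one, contDiffOn_succ_iff_deriv_of_isOpen hI]
  exact ⟨fun t ht => (hγ t ht).differentiableAt.differentiableWithinAt, by simp,
    hγ'.congr fun t ht => (hγ t ht).deriv⟩

theorem isGeodesicOn_christoffel_iff (hI : IsOpen I) :
    IsGeodesicOn V (christoffel G) I γ ↔ MapsTo γ I V ∧ ContDiffOn ℝ 2 γ I ∧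
      ∀ t ∈ I, deriv (deriv γ) t + G (γ t) (deriv γ t) (deriv γ t) = 0 := by
  refine and_congr_right fun _ => and_congr_right fun hγ => forall₂_congr fun t ht => ?_
  have hderiv (s) (hs : s ∈ I) (k) : deriv (fun u => γ u k) s = deriv γ s k :=
    (hasDerivAt_pi.1 (hasDerivAt_deriv_of_contDiffOn_two hγ hI hs).1 k).deriv
  have hderiv₂ (k) : deriv (fun s => deriv (fun u => γ u k) s) t = deriv (deriv γ) t k := by
    rw [← (hasDerivAt_pi.1 (hasDerivAt_deriv_of_contDiffOn_two hγ hI ht).2 k).deriv]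
    exact EventuallyEq.deriv_eq (eventually_of_mem (hI.mem_nhds ht) fun s hs => hderiv s hs k)
  simp only [funext_iff, hderiv₂, hderiv t ht, sum_christoffel_mul, Pi.add_apply, Pi.zero_apply]

theorem hasDerivAt_of_isGeodesicOn (hI : IsOpen I) (h : IsGeodesicOn V (christoffel G) I γ)
    (ht : t ∈ I) : HasDerivAt γ (deriv γ t) t ∧
      HasDerivAt (deriv γ) (-G (γ t) (deriv γ t) (deriv γ t)) t := by
  obtain ⟨-, hγ, heq⟩ := (isGeodesicOn_christoffel_iff hI).1 h
  have hderiv := hasDerivAt_deriv_of_contDiffOn_two hγ hI ht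
  exact ⟨hderiv.1, hderiv.2.congr_deriv (eq_neg_of_add_eq_zero_left (heq t ht))⟩

theorem isGeodesicOn_of_hasDerivAt (hG : ContinuousOn G V) (hI : IsOpen I) (hγV : MapsTo γ I V)
    (hγ : ∀ t ∈ I, HasDerivAt γ (γ' t) t)
    (hγ' : ∀ t ∈ I, HasDerivAt γ' (-G (γ t) (γ' t) (γ' t)) t) :
    IsGeodesicOn V (christoffel G) I γ := by
  have hγc : ContinuousOn γ I := fun t ht => (hγ t ht).continuousAt.continuousWithinAt
  have hγ'c : ContinuousOn γ' I := fun t ht => (hγ' t ht).continuousAt.continuousWithinAt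
  have hderiv : EqOn (deriv γ) γ' I := fun t ht => (hγ t ht).deriv
  have hderiv₂ (t) (ht : t ∈ I) : deriv (deriv γ) t = -G (γ t) (γ' t) (γ' t) :=
    (EventuallyEq.deriv_eq (eventually_of_mem (hI.mem_nhds ht) hderiv)).trans (hγ' t ht).deriv
  refine (isGeodesicOn_christoffel_iff hI).2 ⟨hγV, ?_, fun t ht => ?_⟩
  · have hγ'₁ : ContDiffOn ℝ (0 + 1 : ℕ) γ' I := contDiffOn_succ_of_hasDerivAt hI hγ'
      (contDiffOn_zero.2 (((hG.comp hγc hγV).clm_apply hγ'c).clm_apply hγ'c).neg)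
    exact contDiffOn_succ_of_hasDerivAt hI hγ hγ'₁
  · rw [hderiv₂ t ht, hderiv ht, neg_add_cancel]

theorem exists_isGeodesicOn (hV : IsOpen V) (hG : ContDiffOn ℝ 1 G V) (hx : x ∈ V)
    (v : Fin n → ℝ) : ∃ γ : ℝ → Fin n → ℝ, ∃ ε > 0, γ 0 = x ∧ deriv γ 0 = v ∧
      IsGeodesicOn V (christoffel G) (Ioo (-ε) ε) γ := by
  have hspray : ContDiffAt ℝ 1 (fun z : (Fin n → ℝ) × (Fin n → ℝ) => (z.2, -G z.1 z.2 z.2))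
      (x, v) := by
    have hG₁ : ContDiffAt ℝ 1 (fun z : (Fin n → ℝ) × (Fin n → ℝ) => G z.1) (x, v) :=
      ContDiffAt.comp (x, v) (hG.contDiffAt (hV.mem_nhds hx)) contDiffAt_fst
    exact contDiffAt_snd.prodMk ((hG₁.clm_apply contDiffAt_snd).clm_apply contDiffAt_snd).neg
  obtain ⟨α, hα₀, ε, hε, hα⟩ :=
    exists_integralCurve_mem hspray (prod_mem_nhds (hV.mem_nhds hx) univ_mem)
  have hfst (t) (ht : t ∈ Ioo (-ε) ε) : HasDerivAt (fun t => (α t).1) (α t).2 t := (hα t ht).1.fst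
  refine ⟨fun t => (α t).1, ε, hε, congrArg Prod.fst hα₀, ?_, ?_⟩
  · rw [(hfst 0 ⟨neg_lt_zero.2 hε, hε⟩).deriv, hα₀]
  · exact isGeodesicOn_of_hasDerivAt hG.continuousOn isOpen_Ioo (fun t ht => (hα t ht).2.1) hfst
      fun t ht => (hα t ht).1.snd

end Geodesics

theorem TotallyGeodesic.mono (h : TotallyGeodesic U Γ ω) (hVU : V ⊆ U) : TotallyGeodesic V Γ ω :=
  fun I hI hI' h₀ γ hγ => h I hI hI' h₀ γ ⟨fun t ht => hVU (hγ.1 t ht), hγ.2⟩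

theorem totallyGeodesic_christoffel_iff (hV : IsOpen V) (hG : ContDiffOn ℝ 1 G V)
    (hω : IsFoliationForm V ω) : TotallyGeodesic V (christoffel G) ω ↔
      ∀ x ∈ V, ∀ v, oneForm ω x v = 0 → covDeriv G (oneForm ω) x v v = 0 := by
  have hθ := hω.contDiffOn_oneForm
  constructor
  · intro h x hx v hv
    obtain ⟨γ, ε, hε, rfl, rfl, hγ⟩ := exists_isGeodesicOn hV hG hx v
    have h₀ : (0 : ℝ) ∈ Ioo (-ε) ε := ⟨neg_lt_zero.2 hε, hε⟩
    have hderiv (t) (ht : t ∈ Ioo (-ε) ε) := hasDerivAt_of_isGeodesicOn isOpen_Ioo hγ ht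
    have htan : ∀ t ∈ Ioo (-ε) ε, oneForm ω (γ t) (deriv γ t) = 0 := fun t ht => by
      rw [oneForm_apply_hasDerivAt (hderiv t ht).1]
      exact h _ isOpen_Ioo ordConnected_Ioo h₀ γ hγ
        (by rw [← oneForm_apply_hasDerivAt (hderiv 0 h₀).1, hv]) t ht
    rw [covDeriv_apply, sub_eq_add_neg, ← map_neg]
    exact fderiv_apply_add_eq_zero_of_tangent
      ((hθ.contDiffAt (hV.mem_nhds hx)).differentiableAt (by simp)) (hderiv 0 h₀).1 (hderiv 0 h₀).2
      (eventually_of_mem (isOpen_Ioo.mem_nhds h₀) htan)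
  · intro h I hI hI' h₀ γ hγ hγ₀ t ht
    have hderiv (t) (ht : t ∈ I) := hasDerivAt_of_isGeodesicOn hI hγ ht
    rw [← oneForm_apply_hasDerivAt (hderiv 0 h₀).1] at hγ₀
    rw [← oneForm_apply_hasDerivAt (hderiv t ht).1]
    exact apply_velocity_eq_zero_of_geodesic hV hG.continuousOn
      (hθ.of_le (by exact_mod_cast le_top)) hω.contDiffOn_normalField.continuousOn
      (fun x => hω.oneForm_normalField) h hI' hγ.1 (fun t ht => (hderiv t ht).1)
      (fun t ht => (hderiv t ht).2) h₀ ht hγ₀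

/-- By polarization, since `dω` vanishes on `ker ω`. -/
theorem covDeriv_apply_eq_zero_of_apply_self (hV : IsOpen V) (hω : IsFoliationForm V ω)
    (hx : x ∈ V) (hG : ∀ u v, G x u v = G x v u)
    (h : ∀ v, oneForm ω x v = 0 → covDeriv G (oneForm ω) x v v = 0) {u v : Fin n → ℝ}
    (hu : oneForm ω x u = 0) (hv : oneForm ω x v = 0) : covDeriv G (oneForm ω) x u v = 0 := by
  have hsymm : covDeriv G (oneForm ω) x v u = covDeriv G (oneForm ω) x u v := by
    rw [covDeriv_apply, covDeriv_apply, hω.fderiv_oneForm_apply_comm hV hx hu hv, hG]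
  have hsum := h (u + v) (by rw [map_add, hu, hv, add_zero])
  simp only [map_add, add_apply, h u hu, h v hv, hsymm] at hsum
  linarith

theorem exists_apply_self_eq_of_projEquiv (h : ProjEquiv V (christoffel G) (christoffel G₀))
    (hx : x ∈ V) (v : Fin n → ℝ) : ∃ c : ℝ, G₀ x v v = G x v v + c • v := by
  obtain ⟨ρ, -, hρ⟩ := h
  refine ⟨2 * ∑ i, ρ x i * v i, funext fun k => ?_⟩
  rw [← sum_christoffel_mul, Pi.add_apply, ← sum_christoffel_mul]
  simp only [hρ x hx, add_mul, Finset.sum_add_distrib, ite_mul, zero_mul, Finset.sum_ite_eq,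
    Finset.mem_univ, if_true, Pi.smul_apply, smul_eq_mul, Finset.sum_ite_irrel,
    Finset.sum_const_zero, two_mul, Finset.sum_mul, mul_right_comm, add_assoc]

theorem ProjEquiv.totallyGeodesic (h : ProjEquiv V Γ Γ₀) (hV : IsOpen V)
    (hΓ : IsTorsionFreeConn V Γ) (hΓ₀ : IsTorsionFreeConn V Γ₀) (hω : IsFoliationForm V ω)
    (hgeo : TotallyGeodesic V Γ ω) : TotallyGeodesic V Γ₀ ω := by
  obtain ⟨G, rfl⟩ := christoffel_surjective Γ
  obtain ⟨G₀, rfl⟩ := christoffel_surjective Γ₀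
  rw [isTorsionFreeConn_christoffel_iff] at hΓ hΓ₀
  rw [totallyGeodesic_christoffel_iff hV (hΓ.1.of_le (by exact_mod_cast le_top)) hω] at hgeo
  refine (totallyGeodesic_christoffel_iff hV (hΓ₀.1.of_le (by exact_mod_cast le_top)) hω).2 ?_
  intro x hx v hv
  obtain ⟨c, hc⟩ := exists_apply_self_eq_of_projEquiv h hx v
  rw [covDeriv_apply, hc, map_add, map_smul, hv, smul_zero, add_zero, ← covDeriv_apply]
  exact hgeo x hx v hv

end Foliations

/-! ### Linearization -/

section Linearization

open Set Filter
open scoped Topology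

variable {n : ℕ} {ι : Type*} {U V : Set (Fin n → ℝ)} {ω : (Fin n → ℝ) → Fin n → ℝ}
  {ωs : ι → (Fin n → ℝ) → Fin n → ℝ} {x y p : Fin n → ℝ}
  {e : OpenPartialHomeomorph (Fin n → ℝ) (Fin n → ℝ)}

theorem inLeaf_iff_exists_tangent_path : InLeaf V ω x y ↔
    ∃ γ γ' : ℝ → Fin n → ℝ, γ 0 = x ∧ γ 1 = y ∧ (∀ t, HasDerivAt γ (γ' t) t) ∧ Continuous γ' ∧
      MapsTo γ (Icc 0 1) V ∧ ∀ t ∈ Icc (0 : ℝ) 1, oneForm ω (γ t) (γ' t) = 0 := by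
  constructor
  · rintro ⟨γ, hγ, h₀, h₁, hγV, htan⟩
    have hderiv (t) : HasDerivAt γ (deriv γ t) t := (hγ.differentiable one_ne_zero t).hasDerivAt
    exact ⟨γ, deriv γ, h₀, h₁, hderiv, hγ.continuous_deriv le_rfl, hγV, fun t ht =>
      (oneForm_apply_hasDerivAt (hderiv t)).trans (htan t ht)⟩
  · rintro ⟨γ, γ', h₀, h₁, hγ, hγ', hγV, htan⟩
    have hderiv : deriv γ = γ' := funext fun t => (hγ t).deriv
    exact ⟨γ, contDiff_one_iff_deriv.2 ⟨fun t => (hγ t).differentiableAt, hderiv ▸ hγ'⟩, h₀, h₁,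
      hγV, fun t ht => (oneForm_apply_hasDerivAt (hγ t)).symm.trans (htan t ht)⟩

theorem inLeaf_of_tangent_curve {γ γ' : ℝ → Fin n → ℝ} (hγ : ∀ t, HasDerivAt γ (γ' t) t)
    (hγ' : Continuous γ') (hγV : ∀ t, γ t ∈ V) (htan : ∀ t, oneForm ω (γ t) (γ' t) = 0) (t : ℝ) :
    InLeaf V ω (γ 0) (γ t) :=
  inLeaf_iff_exists_tangent_path.2 ⟨fun s => γ (t * s), fun s => t • γ' (t * s), by simp, by simp,
    fun s => (hγ (t * s)).scomp s (by simpa using! (hasDerivAt_id s).const_mul t), by fun_prop,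
    fun s _ => hγV (t * s), fun s _ => by rw [map_smul, htan, smul_zero]⟩

/-- The map `φ` sends every leaf in `V` of the foliation defined by `ω` into an affine
hyperplane. -/
def LeavesInHyperplanes (V : Set (Fin n → ℝ)) (ω φ : (Fin n → ℝ) → Fin n → ℝ) : Prop :=
  ∀ x ∈ V, ∃ (cv : Fin n → ℝ) (r : ℝ), cv ≠ 0 ∧ ∀ y, InLeaf V ω x y → (∑ k, cv k * φ y k) = r

theorem LeavesInHyperplanes.totallyGeodesic_chartConnection
    (h : LeavesInHyperplanes e.source ω e) (he : IsSmoothChart e)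
    (hω : IsFoliationForm e.source ω) :
    TotallyGeodesic e.source (christoffel (chartConnection e)) ω := by
  have hV := e.open_source
  have hθ := hω.contDiffOn_oneForm.of_le (m := 1) (by exact_mod_cast le_top)
  have hw := hω.contDiffOn_normalField.of_le (m := 1) (by exact_mod_cast le_top)
  have hθw (x) (hx : x ∈ e.source) := hω.oneForm_normalField hx
  refine (totallyGeodesic_christoffel_iff hV
    ((contDiffOn_chartConnection he).of_le (by exact_mod_cast le_top)) hω).2 fun x hx v hv => ?_
  obtain ⟨a, r, ha, hleaf⟩ := h x hx
  have hc : (covector a).comp (fderiv ℝ e x) ≠ 0 := fun h₀ =>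
    covector_ne_zero ha <| ContinuousLinearMap.ext fun u => by
      simpa [he.fderiv_fderiv_symm_apply hx] using
        DFunLike.congr_fun h₀ (fderiv ℝ e.symm (e x) u)
  refine covDeriv_apply_self_eq_zero_of_tangent_curves hV hx
    (mod_cast contDiffOn_infty.1 he.1 2) (isAffineOn_chartConnection he)
    ((hθ.contDiffAt (hV.mem_nhds hx)).differentiableAt one_ne_zero) (hθw x hx) hc
    (fun u hu => ?_) hv
  obtain ⟨γ, γ', rfl, hγ₀', hγ, hγ'c, hγ', hγV, htan⟩ := exists_tangent_curve hV hx hθ hw hθw hu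
  have hlevel (t : ℝ) : covector a (e (γ t)) = r :=
    hleaf _ (inLeaf_of_tangent_curve hγ hγ'c hγV htan t)
  exact ⟨γ, γ', rfl, hγ₀', hγ, hγ', hγV, htan, fun t => (hlevel t).trans (hlevel 0).symm⟩

theorem TotallyGeodesic.leavesInHyperplanes
    (h : TotallyGeodesic e.source (christoffel (chartConnection e)) ω) (he : IsSmoothChart e)
    (hω : IsFoliationForm e.source ω) : LeavesInHyperplanes e.source ω e := by
  intro x hx
  have hG := contDiffOn_chartConnection he
  set c := (oneForm ω x).comp (fderiv ℝ e.symm (e x)) with hc_def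
  have hc : c ≠ 0 := fun h₀ => one_ne_zero (α := ℝ) <| by
    rw [← hω.oneForm_normalField hx, ← he.fderiv_symm_fderiv_apply hx (normalField ω x)]
    exact DFunLike.congr_fun h₀ _
  refine ⟨fun k => c (Pi.single k 1), c (e x), fun h₀ => hc ?_, fun y hy => ?_⟩
  · rw [← covector_components c, h₀, map_zero]
  · obtain ⟨γ, γ', rfl, rfl, hγ, hγ', hγV, htan⟩ := inLeaf_iff_exists_tangent_path.1 hy
    rw [sum_apply_single_mul]
    exact apply_chart_eq_of_tangent_path he (isAffineOn_chartConnection he) hG.continuousOn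
      (hω.contDiffOn_oneForm.of_le (by exact_mod_cast le_top))
      hω.contDiffOn_normalField.continuousOn (fun z => hω.oneForm_normalField)
      (fun z hz u v => covDeriv_apply_eq_zero_of_apply_self e.open_source hω hz
        (chartConnection_apply_comm he z) ((totallyGeodesic_christoffel_iff e.open_source
          (hG.of_le (by exact_mod_cast le_top)) hω).1 h z hz))
      zero_le_one hγV (fun t _ => hγ t) hγ'.continuousOn htan

theorem leavesInHyperplanes_iff_totallyGeodesic (he : IsSmoothChart e)
    (hω : IsFoliationForm e.source ω) : LeavesInHyperplanes e.source ω e ↔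
      TotallyGeodesic e.source (christoffel (chartConnection e)) ω :=
  ⟨fun h => h.totallyGeodesic_chartConnection he hω, fun h => h.leavesInHyperplanes he hω⟩

/-- The family of foliations defined by the 1-forms `ωs` on `U` is linearizable near `p`: a
diffeomorphism `φ : V → W` with inverse `ψ` sends all leaves into affine hyperplanes. -/
def IsLinearizableAt (U : Set (Fin n → ℝ)) (ωs : ι → (Fin n → ℝ) → Fin n → ℝ)
    (p : Fin n → ℝ) : Prop :=
  ∃ V : Set (Fin n → ℝ), IsOpen V ∧ p ∈ V ∧ V ⊆ U ∧
    ∃ φ ψ : (Fin n → ℝ) → Fin n → ℝ, ∃ W : Set (Fin n → ℝ), IsOpen W ∧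
      ContDiffOn ℝ (⊤ : ℕ∞) φ V ∧ ContDiffOn ℝ (⊤ : ℕ∞) ψ W ∧
      MapsTo φ V W ∧ MapsTo ψ W V ∧ (∀ x ∈ V, ψ (φ x) = x) ∧ (∀ y ∈ W, φ (ψ y) = y) ∧
      ∀ i, LeavesInHyperplanes V (ωs i) φ

/-- Near `p`, the foliations defined by the 1-forms `ωs` are totally geodesic for a common
projectively flat connection. -/
def IsProjectivelyFlatGeodesicAt (U : Set (Fin n → ℝ)) (ωs : ι → (Fin n → ℝ) → Fin n → ℝ)
    (p : Fin n → ℝ) : Prop :=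
  ∃ V : Set (Fin n → ℝ), IsOpen V ∧ p ∈ V ∧ V ⊆ U ∧
    ∃ Γ Γ₀ : Fin n → Fin n → Fin n → (Fin n → ℝ) → ℝ,
      IsTorsionFreeConn V Γ ∧ (∀ i, TotallyGeodesic V Γ (ωs i)) ∧
      IsTorsionFreeConn V Γ₀ ∧ (∀ x ∈ V, ∀ k l i j, curv Γ₀ k l i j x = 0) ∧ ProjEquiv V Γ Γ₀

theorem isLinearizableAt_iff_exists_chart : IsLinearizableAt U ωs p ↔
    ∃ e : OpenPartialHomeomorph (Fin n → ℝ) (Fin n → ℝ), p ∈ e.source ∧ e.source ⊆ U ∧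
      IsSmoothChart e ∧ ∀ i, LeavesInHyperplanes e.source (ωs i) e := by
  constructor
  · rintro ⟨V, hV, hpV, hVU, φ, ψ, W, hW, hφ, hψ, hφW, hψV, hψφ, hφψ, hleaves⟩
    let e : OpenPartialHomeomorph (Fin n → ℝ) (Fin n → ℝ) :=
      { toFun := φ, invFun := ψ, source := V, target := W, map_source' := hφW, map_target' := hψV
        left_inv' := hψφ, right_inv' := hφψ, open_source := hV, open_target := hW
        continuousOn_toFun := hφ.continuousOn, continuousOn_invFun := hψ.continuousOn }
    exact ⟨e, hpV, hVU, ⟨hφ, hψ⟩, hleaves⟩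
  · rintro ⟨e, hpe, heU, he, hleaves⟩
    exact ⟨e.source, e.open_source, hpe, heU, e, e.symm, e.target, e.open_target, he.1, he.2,
      e.mapsTo, e.mapsTo_symm, fun _ => e.left_inv, fun _ => e.right_inv, hleaves⟩

theorem isTorsionFreeConn_chartConnection (he : IsSmoothChart e) :
    IsTorsionFreeConn e.source (christoffel (chartConnection e)) :=
  isTorsionFreeConn_christoffel_iff.2
    ⟨contDiffOn_chartConnection he, chartConnection_apply_comm he⟩

theorem curv_chartConnection (he : IsSmoothChart e) (hx : x ∈ e.source) (k l i j : Fin n) :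
    curv (christoffel (chartConnection e)) k l i j x = 0 := by
  have hG := (contDiffOn_chartConnection he).differentiableOn (by simp)
  exact (curv_christoffel_eq_zero_iff (hG.differentiableAt (e.open_source.mem_nhds hx))).2
    (curvatureForm_eq_zero_of_isAffineOn e.open_source (mod_cast contDiffOn_infty.1 he.1 3) hG
      (isAffineOn_chartConnection he) hx (he.injective_fderiv hx)) k l i j

theorem exists_chartConnection_of_curv_eq_zero
    {Γ : Fin n → Fin n → Fin n → (Fin n → ℝ) → ℝ} (hV : IsOpen V) (hp : p ∈ V)
    (hΓ : IsTorsionFreeConn V Γ) (hflat : ∀ x ∈ V, ∀ k l i j, curv Γ k l i j x = 0) :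
    ∃ e : OpenPartialHomeomorph (Fin n → ℝ) (Fin n → ℝ), p ∈ e.source ∧ e.source ⊆ V ∧
      IsSmoothChart e ∧ ∀ x ∈ e.source, ∀ k i j,
        christoffel (chartConnection e) k i j x = Γ k i j x := by
  obtain ⟨G, rfl⟩ := christoffel_surjective Γ
  obtain ⟨hG, hsymm⟩ := isTorsionFreeConn_christoffel_iff.1 hΓ
  have hGd (x) (hx : x ∈ V) : DifferentiableAt ℝ G x :=
    (hG.contDiffAt (hV.mem_nhds hx)).differentiableAt (by simp)
  obtain ⟨e, hpe, heV, he, hGe⟩ := exists_affine_chart hV hp hG (fun x _ => hsymm x)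
    fun x hx => (curv_christoffel_eq_zero_iff (hGd x hx)).1 (hflat x hx)
  refine ⟨e, hpe, heV, he, fun x hx k i j => congrFun (he.injective_fderiv hx ?_) k⟩
  rw [← isAffineOn_chartConnection he x hx, hGe x hx]

theorem isProjectivelyFlatGeodesicAt_iff_exists_chart (hω : ∀ i, IsFoliationForm U (ωs i)) :
    IsProjectivelyFlatGeodesicAt U ωs p ↔
      ∃ e : OpenPartialHomeomorph (Fin n → ℝ) (Fin n → ℝ), p ∈ e.source ∧ e.source ⊆ U ∧
        IsSmoothChart e ∧
        ∀ i, TotallyGeodesic e.source (christoffel (chartConnection e)) (ωs i) := by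
  constructor
  · rintro ⟨V, hV, hpV, hVU, Γ, Γ₀, hΓ, hgeo, hΓ₀, hflat, ρ, hρ, hproj⟩
    obtain ⟨e, hpe, heV, he, heΓ₀⟩ := exists_chartConnection_of_curv_eq_zero hV hpV hΓ₀ hflat
    have hproj_e : ProjEquiv e.source Γ (christoffel (chartConnection e)) :=
      ⟨ρ, hρ.mono heV, fun x hx k i j => (heΓ₀ x hx k i j).trans (hproj x (heV hx) k i j)⟩
    have hΓ_e : IsTorsionFreeConn e.source Γ := ⟨fun k i j => (hΓ.1 k i j).mono heV, hΓ.2⟩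
    exact ⟨e, hpe, heV.trans hVU, he, fun i => hproj_e.totallyGeodesic e.open_source hΓ_e
      (isTorsionFreeConn_chartConnection he) ((hω i).mono (heV.trans hVU)) ((hgeo i).mono heV)⟩
  · rintro ⟨e, hpe, heU, he, hgeo⟩
    have htf := isTorsionFreeConn_chartConnection he
    exact ⟨e.source, e.open_source, hpe, heU, _, _, htf, hgeo, htf,
      fun x => curv_chartConnection he, 0, contDiffOn_const, by simp⟩

theorem statement16_general (hω : ∀ i, IsFoliationForm U (ωs i)) (p : Fin n → ℝ) :
    IsLinearizableAt U ωs p ↔ IsProjectivelyFlatGeodesicAt U ωs p := by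
  rw [isLinearizableAt_iff_exists_chart, isProjectivelyFlatGeodesicAt_iff_exists_chart hω]
  exact exists_congr fun e => and_congr_right fun _ => and_congr_right fun heU =>
    and_congr_right fun he => forall_congr' fun i =>
      leavesInHyperplanes_iff_totallyGeodesic he ((hω i).mono heU)

end Linearization

/-- a `d`-web of hypersurfaces (`d ≥ n+2`) is locally linearizable at `p`
(a local diffeomorphism sends every leaf of every web foliation into an affine
hyperplane) iff, near `p`, the web is geodesic for a torsion-free connection that is
projectively equivalent to a flat connection. -/
theorem statement16 {n d : ℕ} (hn : 2 ≤ n) (hd : n + 2 ≤ d)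
    (U : Set (Fin n → ℝ)) (hU : IsOpen U) (hUconn : IsConnected U)
    (ωs : Fin d → (Fin n → ℝ) → Fin n → ℝ) (hweb : IsWeb U ωs)
    (p : Fin n → ℝ) (hp : p ∈ U) :
    (∃ V : Set (Fin n → ℝ), IsOpen V ∧ p ∈ V ∧ V ⊆ U ∧
      ∃ φ ψ : (Fin n → ℝ) → Fin n → ℝ, ∃ W : Set (Fin n → ℝ), IsOpen W ∧
        ContDiffOn ℝ (⊤ : ℕ∞) φ V ∧ ContDiffOn ℝ (⊤ : ℕ∞) ψ W ∧
        Set.MapsTo φ V W ∧ Set.MapsTo ψ W V ∧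
        (∀ x ∈ V, ψ (φ x) = x) ∧ (∀ y ∈ W, φ (ψ y) = y) ∧
        ∀ i, ∀ x ∈ V, ∃ (cv : Fin n → ℝ) (r : ℝ), cv ≠ 0 ∧
          ∀ y, InLeaf V (ωs i) x y → (∑ k, cv k * φ y k) = r) ↔
    (∃ V : Set (Fin n → ℝ), IsOpen V ∧ p ∈ V ∧ V ⊆ U ∧
      ∃ Γ Γ₀ : Fin n → Fin n → Fin n → (Fin n → ℝ) → ℝ,
        IsTorsionFreeConn V Γ ∧ (∀ i, TotallyGeodesic V Γ (ωs i)) ∧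
        IsTorsionFreeConn V Γ₀ ∧ (∀ x ∈ V, ∀ k l i j, curv Γ₀ k l i j x = 0) ∧
        ProjEquiv V Γ Γ₀) :=
  statement16_general hweb.1 p
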